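/- arXiv:1208.4697 — 4 statements merged into one kernel-verified Lean document; each statement's English description precedes it below -/
import Mathlib

section
/- Let X ⊆ ℝⁿ be open, let f : X → ℝⁿ be a C¹ cooperative irreducible vector field, and let H : X → ℝ be a C¹ first integral for ẋ = f(x) with positive gradient. Suppose x ∈ X has the property that for every ε > 0 and every T > 0 there exist θ > T and a solution η : [0,θ] → X of ẋ = f(x) such that ‖η(0) − x‖ < ε and ‖η(θ) − x‖ < ε (i.e. x is forward nonwandering). Then x is an equilibrium: f(x) = 0. -/
open Set Filter Topology

noncomputable section

/-- `f` is a cooperative vector field on `X`: the off-diagonal entries of the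
Jacobian are nonnegative. -/
def coopVF {n : ℕ} (f : (Fin n → ℝ) → (Fin n → ℝ)) (X : Set (Fin n → ℝ)) : Prop :=
  ∀ x ∈ X, ∀ i j : Fin n, i ≠ j → 0 ≤ fderiv ℝ f x (Pi.single j 1) i

/-- The Jacobian matrix of `f` at `x`. -/
def jacMat {n : ℕ} (f : (Fin n → ℝ) → (Fin n → ℝ)) (x : Fin n → ℝ) :
    Fin n → Fin n → ℝ :=
  fun i j => fderiv ℝ f x (Pi.single j 1) i

/-- A matrix is irreducible if for every nonempty proper subset `S` of indices there
are `i ∈ S`, `j ∉ S` with `A i j ≠ 0`. -/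
def matIrred {n : ℕ} (A : Fin n → Fin n → ℝ) : Prop :=
  ∀ S : Set (Fin n), S.Nonempty → S ≠ Set.univ → ∃ i ∈ S, ∃ j ∉ S, A i j ≠ 0

/-- `X` is p-convex: the segment joining any two order-related points of `X` lies in `X`. -/
def pconvex {n : ℕ} (X : Set (Fin n → ℝ)) : Prop :=
  ∀ x ∈ X, ∀ y ∈ X, x < y → segment ℝ x y ⊆ X

/-- `x ≪ y`: strict inequality in every coordinate. -/
def strLt {n : ℕ} (x y : Fin n → ℝ) : Prop := ∀ i, x i < y i

/-- `γ` is a solution of `ẋ = f(x)` on the time interval `I`, with values in `X`. -/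
def IsSolOn {n : ℕ} (f : (Fin n → ℝ) → (Fin n → ℝ)) (X : Set (Fin n → ℝ))
    (I : Set ℝ) (γ : ℝ → Fin n → ℝ) : Prop :=
  (∀ t ∈ I, γ t ∈ X) ∧ (∀ t ∈ I, HasDerivWithinAt γ (f (γ t)) I t)

/-- The ω-limit set (within `X`) of a curve `γ`. -/
def omegaSet {n : ℕ} (X : Set (Fin n → ℝ)) (γ : ℝ → Fin n → ℝ) :
    Set (Fin n → ℝ) :=
  {y | y ∈ X ∧ ∃ t : ℕ → ℝ, Tendsto t atTop atTop ∧
    Tendsto (fun k => γ (t k)) atTop (𝓝 y)}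

/-- The α-limit set (within `X`) of a curve `γ`. -/
def alphaSet {n : ℕ} (X : Set (Fin n → ℝ)) (γ : ℝ → Fin n → ℝ) :
    Set (Fin n → ℝ) :=
  {y | y ∈ X ∧ ∃ t : ℕ → ℝ, Tendsto t atTop atBot ∧
    Tendsto (fun k => γ (t k)) atTop (𝓝 y)}

/-- The Euclidean norm on `Fin n → ℝ`. -/
def eunorm {n : ℕ} (v : Fin n → ℝ) : ℝ := Real.sqrt (∑ i, (v i) ^ 2)

/-- `X` is order-convex: it contains the order interval of any two of its points. -/
def orderConvex {n : ℕ} (X : Set (Fin n → ℝ)) : Prop :=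
  ∀ x ∈ X, ∀ y ∈ X, x ≤ y → Set.Icc x y ⊆ X

/-!
Write `v = f(z)` and `A = Df(z)`, and let `W(z) = DH(z) v⁺`. Along a solution the gradient of a
first integral solves the adjoint of the linearized equation, so for a fixed set `S` of coordinates
`DH(z) (1_S v)` has time derivative `DH(z) (1_S A v - A (1_S v))`. With `S = {i | 0 < vᵢ}` at a
given time, this function stays below `W` and touches it at that time, and its derivative there
is `≤ 0` because `1_S A v ≤ A v⁺` for a matrix with nonnegative off-diagonal entries. Hence `W`
is nonincreasing along solutions, and returns near `x` force it to be constant along the solution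
through `x`.

Constancy makes that derivative vanish, so `A v⁺` vanishes wherever `v⁺` does, and irreducibility
leaves only `v ≤ 0` or `v ≫ 0`. Since `DH(z) v = 0` and `∇H ≫ 0`, either case gives `v = 0`.
-/

theorem locallyLipschitzOn_of_contDiffOn {E F : Type*} [NormedAddCommGroup E] [NormedSpace ℝ E]
    [NormedAddCommGroup F] [NormedSpace ℝ F] {X : Set E} {f : E → F} (hX : IsOpen X)
    (hf : ContDiffOn ℝ 1 f X) : LocallyLipschitzOn X f := fun _ hz ↦
  have ⟨K, t, ht, hK⟩ := (hf.contDiffAt (hX.mem_nhds hz)).exists_lipschitzOnWith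
  ⟨K, t, mem_nhdsWithin_of_mem_nhds ht, hK⟩

theorem tendsto_add_smul_of_tendsto_zero {𝕜 E α : Type*} [NormedField 𝕜] [NormedAddCommGroup E]
    [NormedSpace 𝕜 E] {l : Filter α} {s : α → 𝕜} {z : α → E} {x : E} (hs : Tendsto s l (𝓝 0))
    (hz : Tendsto z l (𝓝 x)) (u : E) : Tendsto (fun a ↦ z a + s a • u) l (𝓝 x) := by
  simpa only [zero_smul, add_zero] using hz.add (hs.smul_const u)

theorem tendsto_inv_smul_sub_of_hasStrictFDerivAt {𝕜 E F α : Type*} [NontriviallyNormedField 𝕜]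
    [NormedAddCommGroup E] [NormedSpace 𝕜 E] [NormedAddCommGroup F] [NormedSpace 𝕜 F]
    {f : E → F} {f' : E →L[𝕜] F} {x u : E} {l : Filter α} {s : α → 𝕜} {z : α → E}
    (hf : HasStrictFDerivAt f f' x) (hs : Tendsto s l (𝓝[≠] 0)) (hz : Tendsto z l (𝓝 x)) :
    Tendsto (fun a ↦ (s a)⁻¹ • (f (z a + s a • u) - f (z a))) l (𝓝 (f' u)) := by
  have hs_ne : ∀ᶠ a in l, s a ≠ 0 := hs.eventually eventually_mem_nhdsWithin
  have hzu : Tendsto (fun a ↦ z a + s a • u) l (𝓝 x) :=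
    tendsto_add_smul_of_tendsto_zero (hs.mono_right nhdsWithin_le_nhds) hz u
  have herr : (fun a ↦ (s a)⁻¹ • (f (z a + s a • u) - f (z a) - f' (s a • u)))
      =o[l] fun a ↦ (s a)⁻¹ • (s a • u) := by
    refine (Asymptotics.isBigO_refl (fun a ↦ (s a)⁻¹) l).smul_isLittleO ?_
    simpa only [Function.comp_def, add_sub_cancel_left] using
      hf.isLittleO.comp_tendsto (hzu.prodMk_nhds hz)
  have herr_zero : Tendsto (fun a ↦ (s a)⁻¹ • (f (z a + s a • u) - f (z a) - f' (s a • u)))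
      l (𝓝 0) := by
    refine (Asymptotics.isLittleO_one_iff 𝕜).1 ((herr.congr' .rfl ?_).trans_isBigO
      (Asymptotics.isBigO_const_const u one_ne_zero l))
    filter_upwards [hs_ne] with a ha using inv_smul_smul₀ ha u
  rw [← zero_add (f' u)]
  refine (herr_zero.add_const (f' u)).congr' ?_
  filter_upwards [hs_ne] with a ha
  rw [map_smul, smul_sub, inv_smul_smul₀ ha, sub_add_cancel]

theorem hasDerivAt_clm_apply_of_hasDerivAt_apply {𝕜 E F : Type*} [NontriviallyNormedField 𝕜]
    [NormedAddCommGroup E] [NormedSpace 𝕜 E] [NormedAddCommGroup F] [NormedSpace 𝕜 F]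
    {c : 𝕜 → E →L[𝕜] F} {w : 𝕜 → E} {c' : F} {w' : E} {t₀ : 𝕜} (hc : ContinuousAt c t₀)
    (hcw : HasDerivAt (fun t ↦ c t (w t₀)) c' t₀) (hw : HasDerivAt w w' t₀) :
    HasDerivAt (fun t ↦ c t (w t)) (c' + c t₀ w') t₀ := by
  rw [hasDerivAt_iff_tendsto_slope] at hcw hw ⊢
  have hcslope : Tendsto (fun t ↦ c t (slope w t₀ t)) (𝓝[≠] t₀) (𝓝 (c t₀ w')) :=
    (isBoundedBilinearMap_apply.continuous.tendsto (c t₀, w')).comp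
      ((hc.tendsto.mono_left nhdsWithin_le_nhds).prodMk_nhds hw)
  refine (hcw.add hcslope).congr fun t ↦ ?_
  simp only [slope_def_module, map_smul, map_sub, ← smul_add]
  congr 1
  abel

theorem antitoneOn_Icc_of_exists_lowerSupport {W : ℝ → ℝ} {a b : ℝ}
    (hW : ContinuousOn W (Icc a b))
    (hsupp : ∀ t ∈ Ioo a b, ∃ (g : ℝ → ℝ) (g' : ℝ), HasDerivWithinAt g g' (Iio t) t ∧ g' ≤ 0 ∧
      g t = W t ∧ ∀ᶠ s in 𝓝[<] t, g s ≤ W s) :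
    AntitoneOn W (Icc a b) := by
  intro p hp q hq hpq
  by_contra! hlt
  have hpq : p < q := hpq.lt_of_ne (by rintro rfl; exact hlt.false)
  obtain ⟨r, hWr, hpr, hrq⟩ : ∃ r, W p < W r ∧ r ∈ Ioo p q :=
    have hWq : Tendsto W (𝓝[<] q) (𝓝 (W q)) := (hW q hq).mono_of_mem_nhdsWithin
      (mem_of_superset (Ioo_mem_nhdsLT hpq) fun s hs ↦ ⟨hp.1.trans hs.1.le, hs.2.le.trans hq.2⟩)
    ((hWq.eventually_const_lt hlt).and (Ioo_mem_nhdsLT hpq)).exists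
  obtain ⟨c, hc, hcr⟩ : ∃ c > 0, c * (r - p) < W r - W p := by
    have hr : 0 < r - p := sub_pos.2 hpr
    refine ⟨(W r - W p) / (2 * (r - p)), div_pos (sub_pos.2 hWr) (mul_pos two_pos hr), ?_⟩
    rw [div_mul_eq_mul_div, div_lt_iff₀ (mul_pos two_pos hr)]
    nlinarith
  -- At a maximum of `W s - c s` on `[p, r]` the supporting function has slope at least `c`.
  obtain ⟨t, ht, hmax⟩ : ∃ t ∈ Icc p r, IsMaxOn (fun s ↦ W s - c * s) (Icc p r) t :=
    isCompact_Icc.exists_isMaxOn (nonempty_Icc.2 hpr.le)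
      ((hW.mono (Icc_subset_Icc hp.1 (hrq.le.trans hq.2))).sub (by fun_prop))
  have hpt : p < t := ht.1.lt_of_ne (by
    rintro rfl
    have : W r - c * r ≤ W p - c * p := hmax (right_mem_Icc.2 hpr.le)
    linarith)
  obtain ⟨g, g', hg, hg', hgt, hgW⟩ :=
    hsupp t ⟨hp.1.trans_lt hpt, ht.2.trans_lt (hrq.trans_le hq.2)⟩
  rw [hasDerivWithinAt_iff_tendsto_slope' self_notMem_Iio] at hg
  refine hc.not_ge ((ge_of_tendsto hg ?_).trans hg')
  filter_upwards [hgW, Ioo_mem_nhdsLT hpt] with s hgs hs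
  have : W s - c * s ≤ W t - c * t := hmax ⟨hs.1.le, hs.2.le.trans ht.2⟩
  rw [slope_def_field, le_div_iff_of_neg (sub_neg.2 hs.2)]
  linarith

section Flow

variable {E : Type*} [NormedAddCommGroup E] [NormedSpace ℝ E] {X : Set E} {f : E → E} {x : E}

theorem eqOn_Icc_of_isIntegralCurveOn {γ₁ γ₂ : ℝ → E} {a b : ℝ} (hf : LocallyLipschitzOn X f)
    (hγ₁ : IsIntegralCurveOn γ₁ (fun _ ↦ f) (Icc a b)) (hX₁ : MapsTo γ₁ (Icc a b) X)
    (hγ₂ : IsIntegralCurveOn γ₂ (fun _ ↦ f) (Icc a b)) (hX₂ : MapsTo γ₂ (Icc a b) X)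
    (ha : γ₁ a = γ₂ a) : EqOn γ₁ γ₂ (Icc a b) := by
  have hcompact : IsCompact (γ₁ '' Icc a b ∪ γ₂ '' Icc a b) :=
    (isCompact_Icc.image_of_continuousOn hγ₁.continuousOn).union
      (isCompact_Icc.image_of_continuousOn hγ₂.continuousOn)
  obtain ⟨K, hK⟩ := (hf.mono
    (union_subset hX₁.image_subset hX₂.image_subset)).exists_lipschitzOnWith_of_compact hcompact
  have hright : ∀ γ : ℝ → E, IsIntegralCurveOn γ (fun _ ↦ f) (Icc a b) → ∀ t ∈ Ico a b,
      HasDerivWithinAt γ (f (γ t)) (Ici t) t := fun γ hγ t ht ↦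
    (hγ t (Ico_subset_Icc_self ht)).mono_of_mem_nhdsWithin
      (mem_of_superset (Icc_mem_nhdsGE ht.2) (Icc_subset_Icc_left ht.1))
  exact ODE_solution_unique_of_mem_Icc_right (fun _ _ ↦ hK)
    hγ₁.continuousOn (hright γ₁ hγ₁) (fun t ht ↦ .inl ⟨t, Ico_subset_Icc_self ht, rfl⟩)
    hγ₂.continuousOn (hright γ₂ hγ₂) (fun t ht ↦ .inr ⟨t, Ico_subset_Icc_self ht, rfl⟩) ha

theorem exists_continuous_local_flow [CompleteSpace E] (hf : ContDiffAt ℝ 1 f x) (hX : X ∈ 𝓝 x) :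
    ∃ δ > 0, ∃ φ : E → ℝ → E,
      (∀ᶠ z in 𝓝 x, φ z 0 = z ∧ IsIntegralCurveOn (φ z) (fun _ ↦ f) (Icc 0 δ) ∧
        MapsTo (φ z) (Icc 0 δ) X) ∧
      ∀ t ∈ Icc 0 δ, ContinuousAt (fun z ↦ φ z t) x := by
  obtain ⟨ε, hε, a, r, L, K, hr, hPL⟩ := IsPicardLindelof.of_contDiffAt_one hf
  obtain ⟨α, hα, hcont⟩ :=
    (hPL 0).exists_forall_mem_closedBall_eq_hasDerivWithinAt_continuousOn
  simp only [zero_sub, zero_add] at hα hcont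
  have hball : Metric.closedBall x (r : ℝ) ∈ 𝓝 x := Metric.closedBall_mem_nhds x hr
  have hcontAt : ContinuousAt α (x, 0) :=
    hcont.continuousAt (prod_mem_nhds hball (Icc_mem_nhds (neg_lt_zero.2 hε) hε))
  have hαX : ∀ᶠ p in 𝓝 x ×ˢ 𝓝 (0 : ℝ), α p ∈ X := by
    rw [← nhds_prod_eq]
    exact hcontAt.eventually (by rwa [(hα x (mem_of_mem_nhds hball)).1])
  obtain ⟨P, hP, Q, hQ, hPQ⟩ := eventually_prod_iff.1 hαX
  obtain ⟨ρ, hρ, hρQ⟩ := Metric.nhds_basis_closedBall.eventually_iff.1 hQ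
  have hsub : Icc 0 (min ρ (ε / 2)) ⊆ Icc (-ε) ε := fun t ht ↦
    ⟨by linarith [ht.1], by linarith [ht.2, min_le_right ρ (ε / 2)]⟩
  refine ⟨min ρ (ε / 2), by positivity, Function.curry α, ?_, fun t ht ↦ ?_⟩
  · filter_upwards [hP, hball] with z hzP hz
    refine ⟨(hα z hz).1, fun t ht ↦ ((hα z hz).2 t (hsub ht)).mono hsub, fun t ht ↦ ?_⟩
    refine hPQ hzP (hρQ ?_)
    rw [Metric.mem_closedBall, Real.dist_0_eq_abs, abs_of_nonneg ht.1]
    exact ht.2.trans (min_le_left _ _)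
  · exact (hcont.comp (by fun_prop) fun z hz ↦ ⟨hz, hsub ht⟩).continuousAt hball

/-- `x` is a forward nonwandering point of the local flow of `ẋ = f(x)` on `X`: there are
arbitrarily long solution arcs in `X` whose two endpoints are arbitrarily close to `x`. -/
def IsForwardNonwandering (f : E → E) (X : Set E) (x : E) : Prop :=
  ∀ U ∈ 𝓝 x, ∀ T > 0, ∃ θ > T, ∃ η : ℝ → E, IsIntegralCurveOn η (fun _ ↦ f) (Icc 0 θ) ∧
    MapsTo η (Icc 0 θ) X ∧ η 0 ∈ U ∧ η θ ∈ U

theorem exists_isIntegralCurveOn_lyapunov_const [CompleteSpace E] {W : E → ℝ}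
    (hX : IsOpen X) (hf : ContDiffOn ℝ 1 f X) (hx : x ∈ X) (hnw : IsForwardNonwandering f X x)
    (hW : ContinuousOn W X)
    (hanti : ∀ (θ : ℝ) (η : ℝ → E), IsIntegralCurveOn η (fun _ ↦ f) (Icc 0 θ) →
      MapsTo η (Icc 0 θ) X → AntitoneOn (W ∘ η) (Icc 0 θ)) :
    ∃ δ > 0, ∃ y : ℝ → E, y 0 = x ∧ IsIntegralCurveOn y (fun _ ↦ f) (Icc 0 δ) ∧
      MapsTo y (Icc 0 δ) X ∧ ∀ t ∈ Icc 0 δ, W (y t) = W x := by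
  have hXx : X ∈ 𝓝 x := hX.mem_nhds hx
  obtain ⟨δ, hδ, φ, hφ, hφc⟩ := exists_continuous_local_flow (hf.contDiffAt hXx) hXx
  obtain ⟨hφ0, hφx, hφX⟩ := hφ.self_of_nhds
  refine ⟨δ, hδ, φ x, hφ0, hφx, hφX, fun t ht ↦ le_antisymm ?_ ?_⟩
  · simpa only [Function.comp_apply, hφ0] using
      hanti δ (φ x) hφx hφX (left_mem_Icc.2 hδ.le) ht ht.1
  by_contra! hlt
  obtain ⟨m, hm, hmx⟩ := exists_between hlt
  have hW_end : ∀ᶠ z in 𝓝 x, m < W z := (hW.continuousAt hXx).eventually_const_lt hmx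
  have hW_flow : ∀ᶠ z in 𝓝 x, W (φ z t) < m :=
    ((hW.continuousAt (hX.mem_nhds (hφX ht))).comp (f := fun z ↦ φ z t)
      (hφc t ht)).eventually_lt_const hm
  obtain ⟨θ, hθ, η, hη, hηX, ⟨-, hη0, hη0_lt⟩, hηθ, -⟩ :=
    hnw _ (hW_end.and (hφ.and hW_flow)) δ hδ
  have hsub : Icc 0 δ ⊆ Icc 0 θ := Icc_subset_Icc_right hθ.le
  have hηt : η t = φ (η 0) t :=
    eqOn_Icc_of_isIntegralCurveOn (locallyLipschitzOn_of_contDiffOn hX hf)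
      (hη.mono hsub) (hηX.mono_left hsub) hη0.2.1 hη0.2.2 hη0.1.symm ht
  have hle : W (η θ) ≤ W (η t) :=
    hanti θ η hη hηX (hsub ht) (right_mem_Icc.2 (hδ.trans hθ).le) (ht.2.trans hθ.le)
  rw [hηt] at hle
  linarith

end Flow

section FirstIntegral

variable {E F : Type*} [NormedAddCommGroup E] [NormedSpace ℝ E] [NormedAddCommGroup F]
  [NormedSpace ℝ F] {X : Set E} {f : E → E} {H : E → F} {y : ℝ → E} {t₀ : ℝ}

theorem tendsto_inv_smul_fderiv_apply_of_firstIntegral {α : Type*} {l : Filter α} {s : α → ℝ}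
    {z : α → E} {x : E} (hX : X ∈ 𝓝 x) (hf : ContDiffAt ℝ 1 f x)
    (hH : ContinuousAt (fderiv ℝ H) x) (hfi : ∀ z ∈ X, fderiv ℝ H z (f z) = 0)
    (hs : Tendsto s l (𝓝[≠] 0)) (hz : Tendsto z l (𝓝 x)) (u : E) :
    Tendsto (fun a ↦ (s a)⁻¹ • fderiv ℝ H (z a + s a • u) (f (z a))) l
      (𝓝 (-fderiv ℝ H x (fderiv ℝ f x u))) := by
  have hzu : Tendsto (fun a ↦ z a + s a • u) l (𝓝 x) :=
    tendsto_add_smul_of_tendsto_zero (hs.mono_right nhdsWithin_le_nhds) hz u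
  have hquot := tendsto_inv_smul_sub_of_hasStrictFDerivAt (u := u)
    (hf.hasStrictFDerivAt one_ne_zero) hs hz
  refine ((isBoundedBilinearMap_apply.continuous.tendsto (fderiv ℝ H x, _)).comp
    ((hH.tendsto.comp hzu).prodMk_nhds hquot)).neg.congr' ?_
  filter_upwards [hzu.eventually hX] with a ha
  simp only [Function.comp_apply, map_smul, map_sub, hfi _ ha, zero_sub, smul_neg, neg_neg]

/- Passing to the limit `s → 0` in the time derivative of `s⁻¹ (H (y t + s u) - H (y t))` avoids
second derivatives of `H`: as `DH(z) f(z) = 0` at `z = y t + s u`, that derivative is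
`-DH(z) (s⁻¹ (f(z) - f(y t)))`. -/
theorem hasDerivAt_fderiv_apply_of_firstIntegral (hX : IsOpen X) (hf : ContDiffOn ℝ 1 f X)
    (hH : ContDiffOn ℝ 1 H X) (hfi : ∀ z ∈ X, fderiv ℝ H z (f z) = 0)
    (hyX : y t₀ ∈ X) (hy : IsIntegralCurveAt y (fun _ ↦ f) t₀) (u : E) :
    HasDerivAt (fun t ↦ fderiv ℝ H (y t) u)
      (-fderiv ℝ H (y t₀) (fderiv ℝ f (y t₀) u)) t₀ := by
  have hXy : X ∈ 𝓝 (y t₀) := hX.mem_nhds hyX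
  have hDH : ∀ z ∈ X, HasFDerivAt H (fderiv ℝ H z) z := fun z hz ↦
    ((hH.contDiffAt (hX.mem_nhds hz)).differentiableAt one_ne_zero).hasFDerivAt
  have hyc : Tendsto y (𝓝 t₀) (𝓝 (y t₀)) := hy.continuousAt
  have hs : Tendsto Prod.fst (𝓝[≠] (0 : ℝ) ×ˢ 𝓝 t₀) (𝓝[≠] 0) := tendsto_fst
  have hyt : Tendsto (fun p : ℝ × ℝ ↦ y p.2) (𝓝[≠] 0 ×ˢ 𝓝 t₀) (𝓝 (y t₀)) :=
    hyc.comp tendsto_snd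
  have hyu : Tendsto (fun p : ℝ × ℝ ↦ y p.2 + p.1 • u) (𝓝[≠] 0 ×ˢ 𝓝 t₀) (𝓝 (y t₀)) :=
    tendsto_add_smul_of_tendsto_zero (hs.mono_right nhdsWithin_le_nhds) hyt u
  have hlim := tendsto_inv_smul_fderiv_apply_of_firstIntegral hXy (hf.contDiffAt hXy)
    ((hH.continuousOn_fderiv_of_isOpen hX le_rfl).continuousAt hXy) hfi hs hyt u
  refine hasDerivAt_of_tendstoUniformlyOnFilter
    (f := fun s t ↦ s⁻¹ • (H (y t + s • u) - H (y t)))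
    (f' := fun s t ↦ s⁻¹ • fderiv ℝ H (y t + s • u) (f (y t)))
    (g' := fun _ ↦ -fderiv ℝ H (y t₀) (fderiv ℝ f (y t₀) u))
    (tendsto_prod_filter_iff.1 hlim) ?_ ?_
  · filter_upwards [hyu.eventually hXy, hyt.eventually hXy, tendsto_snd.eventually hy]
      with p hpu hp hyp
    have hshift : HasDerivAt (fun t ↦ H (y t + p.1 • u))
        (fderiv ℝ H (y p.2 + p.1 • u) (f (y p.2))) p.2 :=
      (hDH _ hpu).comp_hasDerivAt p.2 (hyp.add_const (p.1 • u))
    have hbase : HasDerivAt (fun t ↦ H (y t)) 0 p.2 :=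
      hfi _ hp ▸ (hDH _ hp).comp_hasDerivAt p.2 hyp
    simpa only [sub_zero] using (hshift.fun_sub hbase).fun_const_smul p.1⁻¹
  · filter_upwards [hyc.eventually hXy] with t ht
    exact ((hDH _ ht).hasLineDerivAt u).tendsto_slope_zero

theorem hasDerivAt_fderiv_apply_curve_of_firstIntegral {w : ℝ → E} {w' : E} (hX : IsOpen X)
    (hf : ContDiffOn ℝ 1 f X) (hH : ContDiffOn ℝ 1 H X) (hfi : ∀ z ∈ X, fderiv ℝ H z (f z) = 0)
    (hyX : y t₀ ∈ X) (hy : IsIntegralCurveAt y (fun _ ↦ f) t₀) (hw : HasDerivAt w w' t₀) :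
    HasDerivAt (fun t ↦ fderiv ℝ H (y t) (w t))
      (fderiv ℝ H (y t₀) (w' - fderiv ℝ f (y t₀) (w t₀))) t₀ := by
  have hDH_cont : ContinuousAt (fun t ↦ fderiv ℝ H (y t)) t₀ :=
    ((hH.continuousOn_fderiv_of_isOpen hX le_rfl).continuousAt (hX.mem_nhds hyX)).comp
      hy.continuousAt
  rw [map_sub, sub_eq_neg_add]
  exact hasDerivAt_clm_apply_of_hasDerivAt_apply hDH_cont
    (hasDerivAt_fderiv_apply_of_firstIntegral hX hf hH hfi hyX hy (w t₀)) hw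

end FirstIntegral

section Cone

open Matrix

variable {ι R : Type*} [Ring R]

theorem map_eq_sum_mul_map_single [Fintype ι] [DecidableEq ι] (L : (ι → R) →ₗ[R] R)
    (u : ι → R) : L u = ∑ i, u i * L (Pi.single i 1) := by
  conv_lhs => rw [← Finset.univ_sum_single u, map_sum]
  refine Finset.sum_congr rfl fun i _ ↦ ?_
  rw [← smul_eq_mul, ← map_smul, ← Pi.single_smul, smul_eq_mul, mul_one]

variable [LinearOrder R]

theorem indicator_le_posPart (S : Set ι) (v : ι → R) : S.indicator v ≤ v⁺ :=
  indicator_le' (fun i _ ↦ le_posPart (v i)) fun i _ ↦ posPart_nonneg (v i)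

theorem indicator_setOf_pos_eq_posPart (v : ι → R) : {i | 0 < v i}.indicator v = v⁺ := by
  ext i
  by_cases hi : 0 < v i
  · rw [indicator_of_mem (show i ∈ {i | 0 < v i} from hi), Pi.posPart_apply,
      posPart_of_nonneg hi.le]
  · rw [indicator_of_notMem (show i ∉ {i | 0 < v i} from hi), Pi.posPart_apply,
      posPart_of_nonpos (not_lt.1 hi)]

variable [IsStrictOrderedRing R]

theorem map_nonneg_of_map_single_nonneg [Finite ι] [DecidableEq ι] {L : (ι → R) →ₗ[R] R} {u : ι → R}
    (hL : ∀ i, 0 ≤ L (Pi.single i 1)) (hu : 0 ≤ u) : 0 ≤ L u := by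
  have := Fintype.ofFinite ι
  rw [map_eq_sum_mul_map_single]
  exact Finset.sum_nonneg fun i _ ↦ mul_nonneg (hu i) (hL i)

theorem eq_zero_of_map_eq_zero_of_map_single_pos [Finite ι] [DecidableEq ι] {L : (ι → R) →ₗ[R] R}
    {u : ι → R} (hL : ∀ i, 0 < L (Pi.single i 1)) (hu : 0 ≤ u) (hLu : L u = 0) : u = 0 := by
  have := Fintype.ofFinite ι
  rw [map_eq_sum_mul_map_single,
    Finset.sum_eq_zero_iff_of_nonneg fun i _ ↦ mul_nonneg (hu i) (hL i).le] at hLu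
  ext i
  exact (mul_eq_zero.1 (hLu i (Finset.mem_univ i))).resolve_right (hL i).ne'

/-- A Metzler matrix: a square matrix whose off-diagonal entries are nonnegative, such as the
Jacobian matrices of a cooperative vector field. -/
def IsMetzler (A : Matrix ι ι R) : Prop := Pairwise fun i j ↦ 0 ≤ A i j

variable {A : Matrix ι ι R} {u : ι → R} {i : ι}

theorem IsMetzler.mul_nonneg_of_apply_eq_zero (hA : IsMetzler A) (hu : 0 ≤ u) (hi : u i = 0)
    (j : ι) : 0 ≤ A i j * u j := by
  obtain rfl | hij := eq_or_ne i j
  · rw [hi, mul_zero]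
  · exact mul_nonneg (hA hij) (hu j)

variable [Fintype ι]

theorem IsMetzler.mulVec_apply_nonneg (hA : IsMetzler A) (hu : 0 ≤ u) (hi : u i = 0) :
    0 ≤ (A *ᵥ u) i :=
  Finset.sum_nonneg fun j _ ↦ hA.mul_nonneg_of_apply_eq_zero hu hi j

theorem IsMetzler.apply_eq_zero_of_mulVec_apply_eq_zero (hA : IsMetzler A) (hu : 0 ≤ u)
    (hi : u i = 0) (hAu : (A *ᵥ u) i = 0) {j : ι} (hj : u j ≠ 0) : A i j = 0 :=
  have hsum := (Finset.sum_eq_zero_iff_of_nonneg fun j _ ↦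
    hA.mul_nonneg_of_apply_eq_zero hu hi j).1 hAu
  (mul_eq_zero.1 (hsum j (Finset.mem_univ j))).resolve_right hj

theorem IsMetzler.indicator_mulVec_le_mulVec_posPart (hA : IsMetzler A) (v : ι → R) :
    {i | 0 < v i}.indicator (A *ᵥ v) ≤ A *ᵥ v⁺ := by
  refine indicator_le' (fun i (hi : 0 < v i) ↦ ?_) fun i (hi : ¬0 < v i) ↦ ?_
  · have hneg : 0 ≤ (A *ᵥ v⁻) i :=
      hA.mulVec_apply_nonneg (negPart_nonneg v) (negPart_of_nonneg hi.le)
    calc (A *ᵥ v) i = (A *ᵥ v⁺) i - (A *ᵥ v⁻) i := by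
          rw [← Pi.sub_apply, ← mulVec_sub, posPart_sub_negPart]
      _ ≤ (A *ᵥ v⁺) i := sub_le_self _ hneg
  · exact hA.mulVec_apply_nonneg (posPart_nonneg v) (posPart_of_nonpos (not_lt.1 hi))

theorem eq_zero_or_forall_pos_of_matIrred {n : ℕ} {A : Matrix (Fin n) (Fin n) ℝ} {u : Fin n → ℝ}
    (hA : IsMetzler A) (hirr : matIrred A) (hu : 0 ≤ u) (hAu : ∀ i, u i = 0 → (A *ᵥ u) i = 0) :
    u = 0 ∨ ∀ i, 0 < u i := by
  by_contra! ⟨hne, k, hk⟩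
  obtain ⟨i, hi, j, hj, hij⟩ := hirr {i | u i = 0} ⟨k, hk.antisymm (hu k)⟩
    fun huniv ↦ hne (funext (eq_univ_iff_forall.1 huniv))
  exact hij (hA.apply_eq_zero_of_mulVec_apply_eq_zero hu hi (hAu i hi) hj)

end Cone

section CooperativeFirstIntegral

open Matrix

variable {n : ℕ} {X : Set (Fin n → ℝ)} {f : (Fin n → ℝ) → Fin n → ℝ} {H : (Fin n → ℝ) → ℝ}
  {y : ℝ → Fin n → ℝ} {a b t₀ : ℝ}

theorem fderiv_apply_eq_jacMat_mulVec (f : (Fin n → ℝ) → Fin n → ℝ) (z u : Fin n → ℝ) :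
    fderiv ℝ f z u = of (jacMat f z) *ᵥ u := by
  have hmat : of (jacMat f z) = (fderiv ℝ f z).toLinearMap.toMatrix' := rfl
  rw [hmat, LinearMap.toMatrix'_mulVec, ContinuousLinearMap.coe_coe]

/-- The rate at which `H` increases in the direction of the positive part of the velocity `f z`.
As `DH(z) f(z) = 0` for a first integral, this is half of `∑ᵢ ∂ᵢH(z) |fⁱ(z)|`. -/
def ascentRate (f : (Fin n → ℝ) → Fin n → ℝ) (H : (Fin n → ℝ) → ℝ) (z : Fin n → ℝ) : ℝ :=
  fderiv ℝ H z (f z)⁺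

theorem continuousOn_ascentRate (hX : IsOpen X) (hf : ContinuousOn f X)
    (hH : ContDiffOn ℝ 1 H X) : ContinuousOn (ascentRate f H) X :=
  (hH.continuousOn_fderiv_of_isOpen hX le_rfl).clm_apply
    (continuousOn_pi.2 fun i ↦ ((continuousOn_pi.1 hf i).sup continuousOn_const))

theorem fderiv_indicator_le_ascentRate {z : Fin n → ℝ}
    (hgrad : ∀ i, 0 ≤ fderiv ℝ H z (Pi.single i 1)) (S : Set (Fin n)) :
    fderiv ℝ H z (S.indicator (f z)) ≤ ascentRate f H z := by
  rw [ascentRate, ← sub_nonneg, ← map_sub]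
  exact map_nonneg_of_map_single_nonneg (L := (fderiv ℝ H z).toLinearMap) hgrad
    (sub_nonneg.2 (indicator_le_posPart S (f z)))

theorem fderiv_indicator_setOf_pos_eq_ascentRate (z : Fin n → ℝ) :
    fderiv ℝ H z ({i | 0 < f z i}.indicator (f z)) = ascentRate f H z := by
  rw [ascentRate, indicator_setOf_pos_eq_posPart]

theorem hasDerivAt_fderiv_indicator_setOf_pos (hX : IsOpen X) (hf : ContDiffOn ℝ 1 f X)
    (hH : ContDiffOn ℝ 1 H X) (hfi : ∀ z ∈ X, fderiv ℝ H z (f z) = 0)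
    (hyX : y t₀ ∈ X) (hy : IsIntegralCurveAt y (fun _ ↦ f) t₀) :
    HasDerivAt (fun t ↦ fderiv ℝ H (y t) ({i | 0 < f (y t₀) i}.indicator (f (y t))))
      (fderiv ℝ H (y t₀) ({i | 0 < f (y t₀) i}.indicator (of (jacMat f (y t₀)) *ᵥ f (y t₀)) -
        of (jacMat f (y t₀)) *ᵥ (f (y t₀))⁺)) t₀ := by
  have hfy : HasDerivAt (fun t ↦ f (y t)) (of (jacMat f (y t₀)) *ᵥ f (y t₀)) t₀ :=
    fderiv_apply_eq_jacMat_mulVec f (y t₀) (f (y t₀)) ▸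
      ((hf.contDiffAt (hX.mem_nhds hyX)).differentiableAt one_ne_zero).hasFDerivAt.comp_hasDerivAt
        t₀ hy.hasDerivAt
  have hind : HasDerivAt (fun t ↦ {i | 0 < f (y t₀) i}.indicator (f (y t)))
      ({i | 0 < f (y t₀) i}.indicator (of (jacMat f (y t₀)) *ᵥ f (y t₀))) t₀ := by
    refine hasDerivAt_pi.2 fun i ↦ ?_
    by_cases hi : i ∈ {i | 0 < f (y t₀) i}
    · simpa only [indicator_of_mem hi] using hasDerivAt_pi.1 hfy i
    · simpa only [indicator_of_notMem hi] using hasDerivAt_const t₀ (0 : ℝ)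
  simpa only [fderiv_apply_eq_jacMat_mulVec f, indicator_setOf_pos_eq_posPart] using
    hasDerivAt_fderiv_apply_curve_of_firstIntegral hX hf hH hfi hyX hy hind

theorem antitoneOn_ascentRate_comp (hX : IsOpen X) (hf : ContDiffOn ℝ 1 f X)
    (hcoop : coopVF f X) (hH : ContDiffOn ℝ 1 H X) (hfi : ∀ z ∈ X, fderiv ℝ H z (f z) = 0)
    (hgrad : ∀ z ∈ X, ∀ i, 0 ≤ fderiv ℝ H z (Pi.single i 1))
    (hy : IsIntegralCurveOn y (fun _ ↦ f) (Icc a b)) (hyX : MapsTo y (Icc a b) X) :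
    AntitoneOn (ascentRate f H ∘ y) (Icc a b) := by
  refine antitoneOn_Icc_of_exists_lowerSupport
    ((continuousOn_ascentRate hX hf.continuousOn hH).comp hy.continuousOn hyX) fun t ht ↦ ?_
  have htX : y t ∈ X := hyX (Ioo_subset_Icc_self ht)
  have hderiv := hasDerivAt_fderiv_indicator_setOf_pos hX hf hH hfi htX
    (hy.isIntegralCurveAt (Icc_mem_nhds ht.1 ht.2))
  refine ⟨_, _, hderiv.hasDerivWithinAt, ?_, fderiv_indicator_setOf_pos_eq_ascentRate (y t), ?_⟩
  · have hA : IsMetzler (of (jacMat f (y t))) := hcoop (y t) htX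
    rw [← neg_nonneg, ← map_neg, neg_sub]
    exact map_nonneg_of_map_single_nonneg (L := (fderiv ℝ H (y t)).toLinearMap) (hgrad _ htX)
      (sub_nonneg.2 (hA.indicator_mulVec_le_mulVec_posPart (f (y t))))
  · filter_upwards [Ioo_mem_nhdsLT ht.1] with s hs
    exact fderiv_indicator_le_ascentRate
      (hgrad _ (hyX ⟨hs.1.le, hs.2.le.trans ht.2.le⟩)) _

theorem eq_zero_of_isLocalMax_ascentRate_comp (hX : IsOpen X) (hf : ContDiffOn ℝ 1 f X)
    (hcoop : coopVF f X) (hirr : ∀ z ∈ X, matIrred (jacMat f z)) (hH : ContDiffOn ℝ 1 H X)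
    (hfi : ∀ z ∈ X, fderiv ℝ H z (f z) = 0)
    (hgrad : ∀ z ∈ X, ∀ i, 0 < fderiv ℝ H z (Pi.single i 1))
    (hyX : y t₀ ∈ X) (hy : IsIntegralCurveAt y (fun _ ↦ f) t₀)
    (hmax : IsLocalMax (ascentRate f H ∘ y) t₀) : f (y t₀) = 0 := by
  set v := f (y t₀) with hv
  have hA : IsMetzler (of (jacMat f (y t₀))) := hcoop (y t₀) hyX
  have hpos_map {u : Fin n → ℝ} (hu : 0 ≤ u) (hDu : fderiv ℝ H (y t₀) u = 0) : u = 0 :=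
    eq_zero_of_map_eq_zero_of_map_single_pos (L := (fderiv ℝ H (y t₀)).toLinearMap)
      (hgrad _ hyX) hu hDu
  have hsupp_max : IsLocalMax
      (fun t ↦ fderiv ℝ H (y t) ({i | 0 < v i}.indicator (f (y t)))) t₀ := by
    filter_upwards [hmax, hy.continuousAt.eventually (hX.mem_nhds hyX)] with t ht htX
    rw [hv, fderiv_indicator_setOf_pos_eq_ascentRate]
    exact (fderiv_indicator_le_ascentRate (fun i ↦ (hgrad _ htX i).le) _).trans ht
  have hcomm : of (jacMat f (y t₀)) *ᵥ v⁺ =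
      {i | 0 < v i}.indicator (of (jacMat f (y t₀)) *ᵥ v) := by
    refine sub_eq_zero.1 (hpos_map (sub_nonneg.2 (hA.indicator_mulVec_le_mulVec_posPart v)) ?_)
    rw [← neg_sub, map_neg, neg_eq_zero]
    exact hsupp_max.hasDerivAt_eq_zero
      (hasDerivAt_fderiv_indicator_setOf_pos hX hf hH hfi hyX hy)
  obtain hzero | hpos := eq_zero_or_forall_pos_of_matIrred hA (hirr _ hyX) (posPart_nonneg v)
    fun i hi ↦ by
      rw [hcomm, indicator_of_notMem (show i ∉ {i | 0 < v i} from (posPart_eq_zero.1 hi).not_gt)]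
  · have hneg : -v = 0 := hpos_map (neg_nonneg.2 (posPart_eq_zero.1 hzero)) (by
      rw [map_neg, hfi _ hyX, neg_zero])
    exact neg_eq_zero.1 hneg
  · exact hpos_map (fun i ↦ (posPart_pos_iff.1 (hpos i)).le) (hfi _ hyX)

end CooperativeFirstIntegral

theorem norm_le_eunorm {n : ℕ} (v : Fin n → ℝ) : ‖v‖ ≤ eunorm v :=
  (pi_norm_le_iff_of_nonneg (Real.sqrt_nonneg _)).2 fun i ↦ Real.abs_le_sqrt <|
    Finset.single_le_sum (f := fun i ↦ v i ^ 2) (fun j _ ↦ sq_nonneg (v j)) (Finset.mem_univ i)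

theorem isForwardNonwandering_of_eunorm {n : ℕ} {f : (Fin n → ℝ) → Fin n → ℝ}
    {X : Set (Fin n → ℝ)} {x : Fin n → ℝ}
    (hnw : ∀ ε > (0 : ℝ), ∀ T > (0 : ℝ), ∃ θ > T, ∃ η : ℝ → Fin n → ℝ,
      IsSolOn f X (Icc 0 θ) η ∧ eunorm (η 0 - x) < ε ∧ eunorm (η θ - x) < ε) :
    IsForwardNonwandering f X x := by
  intro U hU T hT
  obtain ⟨ε, hε, hεU⟩ := Metric.mem_nhds_iff.1 hU
  have hmem {z : Fin n → ℝ} (hz : eunorm (z - x) < ε) : z ∈ U :=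
    hεU (mem_ball_iff_norm.2 ((norm_le_eunorm _).trans_lt hz))
  obtain ⟨θ, hθ, η, ⟨hηX, hη⟩, hη₀, hηθ⟩ := hnw ε hε T hT
  exact ⟨θ, hθ, η, hη, hηX, hmem hη₀, hmem hηθ⟩

/-- a forward nonwandering point of a cooperative irreducible system
with a `C¹` first integral with positive gradient is an equilibrium. -/
theorem stmt_6 {n : ℕ} {X : Set (Fin n → ℝ)} (hX : IsOpen X)
    {f : (Fin n → ℝ) → (Fin n → ℝ)} (hf : ContDiffOn ℝ 1 f X) (hcoop : coopVF f X)
    (hirr : ∀ x ∈ X, matIrred (jacMat f x))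
    {H : (Fin n → ℝ) → ℝ} (hH : ContDiffOn ℝ 1 H X)
    (hfi : ∀ x ∈ X, fderiv ℝ H x (f x) = 0)
    (hgrad : ∀ x ∈ X, ∀ i, 0 < fderiv ℝ H x (Pi.single i 1))
    {x : Fin n → ℝ} (hx : x ∈ X)
    (hnw : ∀ ε > (0 : ℝ), ∀ T > (0 : ℝ), ∃ θ > T, ∃ η : ℝ → Fin n → ℝ,
      IsSolOn f X (Set.Icc 0 θ) η ∧ eunorm (η 0 - x) < ε ∧ eunorm (η θ - x) < ε) :
    f x = 0 := by
  obtain ⟨δ, hδ, y, rfl, hy, hyX, hconst⟩ := exists_isIntegralCurveOn_lyapunov_const hX hf hx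
    (isForwardNonwandering_of_eunorm hnw) (continuousOn_ascentRate hX hf.continuousOn hH)
    fun _ _ ↦ antitoneOn_ascentRate_comp hX hf hcoop hH hfi fun z hz i ↦ (hgrad z hz i).le
  have hzero : ∀ t ∈ Ioo 0 δ, f (y t) = 0 := by
    intro t ht
    refine eq_zero_of_isLocalMax_ascentRate_comp hX hf hcoop hirr hH hfi hgrad
      (hyX (Ioo_subset_Icc_self ht)) (hy.isIntegralCurveAt (Icc_mem_nhds ht.1 ht.2)) ?_
    filter_upwards [Icc_mem_nhds ht.1 ht.2] with s hs
    exact ((hconst s hs).trans (hconst t (Ioo_subset_Icc_self ht)).symm).le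
  have hlim : Tendsto (f ∘ y) (𝓝[>] 0) (𝓝 (f (y 0))) :=
    ((hf.continuousOn.comp hy.continuousOn hyX) 0 (left_mem_Icc.2 hδ.le)).mono_of_mem_nhdsWithin
      (Icc_mem_nhdsGT hδ)
  exact tendsto_nhds_unique hlim <| tendsto_const_nhds.congr' <|
    mem_of_superset (Ioo_mem_nhdsGT hδ) fun t ht ↦ (hzero t ht).symm
end
end

section
/- Let X ⊆ ℝⁿ be open, let f : X → ℝⁿ be a C¹ cooperative irreducible vector field, and let H : X → ℝ be a C¹ first integral for ẋ = f(x) with positive gradient. Then for every solution γ : [0,∞) → X of ẋ = f(x), the ω-limit set of γ contains at most one point (it is either empty or a singleton). -/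
open Set Filter Topology

noncomputable section

/-!
Write `x ⊔ y` for the coordinatewise maximum. If `x` and `y` are nearby solutions, then by
cooperativity `t ↦ x t ⊔ y t` is a subsolution (Müller–Kamke), so `H (x t ⊔ y t)` is nonincreasing
for a first integral `H` with positive gradient. Applying this to `x` and its time shift
`x (· + h)`, and dividing by `h → 0⁺`, shows that `V = DH[f⁺]` is nonincreasing along every
solution. Irreducibility makes `V` drop strictly as soon as the solution is not an equilibrium.

An ω-limit set is locally invariant and `V` and `H` are constant on it, so it consists of equilibria
on one level set of `H`. Such equilibria are isolated: by cooperativity the maximum of two nearby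
ones is an equilibrium, by irreducibility it is one of the two, and `H` is strictly increasing.
Finally, an ω-limit set with an isolated point is a singleton.
-/

instance continuousSup_pi {ι : Type*} {L : ι → Type*} [∀ i, Max (L i)]
    [∀ i, TopologicalSpace (L i)] [∀ i, ContinuousSup (L i)] : ContinuousSup (∀ i, L i) where
  continuous_sup := continuous_pi fun i =>
    ((continuous_apply i).comp continuous_fst).sup ((continuous_apply i).comp continuous_snd)

section PositiveFunctional

variable {ι : Type*} [DecidableEq ι]

lemma apply_eq_sum_mul_apply_single [Fintype ι] (L : (ι → ℝ) →L[ℝ] ℝ) (v : ι → ℝ) :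
    L v = ∑ i, v i * L (Pi.single i 1) := by
  conv_lhs => rw [pi_eq_sum_univ' v, map_sum]
  simp only [map_smul, smul_eq_mul]

variable [Finite ι] {L : (ι → ℝ) →L[ℝ] ℝ}

lemma apply_nonneg_of_nonneg (hL : ∀ i, 0 ≤ L (Pi.single i 1)) {v : ι → ℝ} (hv : 0 ≤ v) :
    0 ≤ L v := by
  cases nonempty_fintype ι
  rw [apply_eq_sum_mul_apply_single]
  exact Finset.sum_nonneg fun i _ => mul_nonneg (hv i) (hL i)

lemma apply_pos_of_pos (hL : ∀ i, 0 < L (Pi.single i 1)) {v : ι → ℝ} (hv : 0 < v) :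
    0 < L v := by
  cases nonempty_fintype ι
  obtain ⟨hv, i, hi⟩ := Pi.lt_def.1 hv
  rw [apply_eq_sum_mul_apply_single]
  exact Finset.sum_pos' (fun j _ => mul_nonneg (hv j) (hL j).le)
    ⟨i, Finset.mem_univ i, mul_pos hi (hL i)⟩

lemma eq_zero_of_nonneg_of_apply_eq_zero (hL : ∀ i, 0 < L (Pi.single i 1)) {v : ι → ℝ}
    (hv : 0 ≤ v) (h : L v = 0) : v = 0 := by
  by_contra hne
  exact (apply_pos_of_pos hL (lt_of_le_of_ne hv (Ne.symm hne))).ne' h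

lemma exists_pos_of_apply_eq_zero (hL : ∀ i, 0 < L (Pi.single i 1)) {v : ι → ℝ} (hv : v ≠ 0)
    (h : L v = 0) : ∃ i, 0 < v i := by
  by_contra! hle
  refine hv (neg_eq_zero.1 (eq_zero_of_nonneg_of_apply_eq_zero hL ?_ ?_))
  · exact fun i => neg_nonneg.2 (hle i)
  · rw [map_neg, h, neg_zero]

end PositiveFunctional

section Calculus

lemma hasFDerivAt_of_contDiffOn {E F : Type*} [NormedAddCommGroup E] [NormedSpace ℝ E]
    [NormedAddCommGroup F] [NormedSpace ℝ F] {g : E → F} {U : Set E} (hU : IsOpen U)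
    (hg : ContDiffOn ℝ 1 g U) {x : E} (hx : x ∈ U) : HasFDerivAt g (fderiv ℝ g x) x :=
  ((hg.contDiffAt (hU.mem_nhds hx)).differentiableAt one_ne_zero).hasFDerivAt

lemma continuousAt_fderiv_of_contDiffOn {E F : Type*} [NormedAddCommGroup E] [NormedSpace ℝ E]
    [NormedAddCommGroup F] [NormedSpace ℝ F] {g : E → F} {U : Set E} (hU : IsOpen U)
    (hg : ContDiffOn ℝ 1 g U) {x : E} (hx : x ∈ U) : ContinuousAt (fderiv ℝ g) x :=
  (hg.continuousOn_fderiv_of_isOpen hU le_rfl).continuousAt (hU.mem_nhds hx)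

lemma le_add_mul_sub_of_deriv_right_le {φ : ℝ → ℝ} {a b C : ℝ} (hab : a ≤ b)
    (hφ : ContinuousOn φ (Icc a b))
    (hφ' : ∀ t ∈ Ico a b, ∃ d ≤ C, HasDerivWithinAt φ d (Ici t) t) :
    φ b ≤ φ a + C * (b - a) := by
  choose! d hdC hd using hφ'
  have hB (t : ℝ) : HasDerivAt (fun s => φ a + C * (s - a)) C t := by
    simpa using (((hasDerivAt_id t).sub_const a).const_mul C).const_add (φ a)
  exact image_le_of_deriv_right_le_deriv_boundary hφ hd (by simp)
    (fun t _ => (hB t).continuousAt.continuousWithinAt)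
    (fun t _ => (hB t).hasDerivWithinAt) hdC (right_mem_Icc.2 hab)

lemma add_mul_sub_le_of_le_deriv_right {φ : ℝ → ℝ} {a b C : ℝ} (hab : a ≤ b)
    (hφ : ContinuousOn φ (Icc a b))
    (hφ' : ∀ t ∈ Ico a b, ∃ d ≥ C, HasDerivWithinAt φ d (Ici t) t) :
    φ a + C * (b - a) ≤ φ b := by
  have hneg := le_add_mul_sub_of_deriv_right_le (φ := -φ) (C := -C) hab hφ.neg fun t ht =>
    let ⟨d, hd, hφd⟩ := hφ' t ht
    ⟨-d, neg_le_neg hd, hφd.neg⟩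
  simp only [Pi.neg_apply] at hneg
  linarith

lemma le_of_eventually_right_le {φ : ℝ → ℝ} {a b : ℝ} (hab : a ≤ b)
    (hφ : ContinuousOn φ (Icc a b)) (hle : ∀ t ∈ Ico a b, ∀ᶠ s in 𝓝[>] t, φ s ≤ φ t) :
    φ b ≤ φ a := by
  refine image_le_of_liminf_slope_right_le_deriv_boundary (B := fun _ => φ a) (B' := 0) hφ le_rfl
    continuousOn_const (fun t _ => hasDerivWithinAt_const ..) (fun t ht r hr => ?_)
    (right_mem_Icc.2 hab)
  refine Eventually.frequently ?_
  filter_upwards [hle t ht, self_mem_nhdsWithin] with s hs hts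
  rw [slope_def_field]
  exact (div_nonpos_of_nonpos_of_nonneg (sub_nonpos.2 hs) (sub_nonneg.2 (le_of_lt hts))).trans_lt
    hr

lemma le_of_hasDerivWithinAt_of_eventually_le {φ ψ : ℝ → ℝ} {φ' ψ' t : ℝ}
    (hφ : HasDerivWithinAt φ φ' (Ici t) t) (hψ : HasDerivWithinAt ψ ψ' (Ici t) t)
    (heq : φ t = ψ t) (hle : ∀ᶠ s in 𝓝[>] t, φ s ≤ ψ s) : φ' ≤ ψ' := by
  have hslope {g : ℝ → ℝ} {g' : ℝ} (hg : HasDerivWithinAt g g' (Ici t) t) :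
      Tendsto (slope g t) (𝓝[>] t) (𝓝 g') :=
    (hasDerivWithinAt_iff_tendsto_slope' self_notMem_Ioi).1 hg.Ioi_of_Ici
  refine le_of_tendsto_of_tendsto (hslope hφ) (hslope hψ) ?_
  filter_upwards [hle, self_mem_nhdsWithin] with s hs hts
  rw [slope_def_field, slope_def_field, heq]
  exact div_le_div_of_nonneg_right (sub_le_sub_right hs _) (sub_nonneg.2 (le_of_lt hts))

lemma hasDerivWithinAt_max_of_lt {φ ψ : ℝ → ℝ} {a t : ℝ} (hφ : HasDerivWithinAt φ a (Ici t) t)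
    (hψ : ContinuousWithinAt ψ (Ici t) t) (hlt : ψ t < φ t) :
    HasDerivWithinAt (fun s => max (φ s) (ψ s)) a (Ici t) t := by
  refine hφ.congr_of_eventuallyEq ?_ (max_eq_left hlt.le)
  filter_upwards [hψ.eventually_lt hφ.continuousWithinAt hlt] with s hs
  exact max_eq_left hs.le

lemma hasDerivWithinAt_max_of_eq {φ ψ : ℝ → ℝ} {a b t : ℝ}
    (hφ : HasDerivWithinAt φ a (Ici t) t) (hψ : HasDerivWithinAt ψ b (Ici t) t)
    (heq : φ t = ψ t) :
    HasDerivWithinAt (fun s => max (φ s) (ψ s)) (max a b) (Ici t) t := by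
  rw [hasDerivWithinAt_iff_tendsto_slope] at hφ hψ ⊢
  refine (hφ.max hψ).congr' ?_
  filter_upwards [self_mem_nhdsWithin] with s hs
  have hts : 0 ≤ s - t := sub_nonneg.2 hs.1
  simp only [slope_def_field, heq, max_self]
  rw [max_div_div_right hts, max_sub_sub_right]

lemma exists_hasDerivWithinAt_max {φ ψ : ℝ → ℝ} {a b t : ℝ}
    (hφ : HasDerivWithinAt φ a (Ici t) t) (hψ : HasDerivWithinAt ψ b (Ici t) t) :
    ∃ d, HasDerivWithinAt (fun s => max (φ s) (ψ s)) d (Ici t) t ∧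
      (d = a ∧ ψ t ≤ φ t ∨ d = b ∧ φ t ≤ ψ t) := by
  rcases lt_trichotomy (ψ t) (φ t) with hlt | heq | hgt
  · exact ⟨a, hasDerivWithinAt_max_of_lt hφ hψ.continuousWithinAt hlt, .inl ⟨rfl, hlt.le⟩⟩
  · refine ⟨_, hasDerivWithinAt_max_of_eq hφ hψ heq.symm, ?_⟩
    exact (max_choice a b).imp (⟨·, heq.le⟩) (⟨·, heq.ge⟩)
  · refine ⟨b, ?_, .inr ⟨rfl, hgt.le⟩⟩
    simpa only [max_comm] using hasDerivWithinAt_max_of_lt hψ hφ.continuousWithinAt hgt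

lemma hasDerivWithinAt_comp_sup_shift {ι : Type*} [Finite ι] {H : (ι → ℝ) → ℝ}
    {L : (ι → ℝ) →L[ℝ] ℝ} {γ : ℝ → ι → ℝ} {v : ι → ℝ} {t : ℝ}
    (hH : HasFDerivAt H L (γ t)) (hγ : HasDerivWithinAt γ v (Ici t) t) :
    HasDerivWithinAt (fun h => H (γ t ⊔ γ (t + h))) (L v⁺) (Ici 0) 0 := by
  cases nonempty_fintype ι
  have hshift : HasDerivWithinAt (fun h => γ (t + h)) v (Ici 0) 0 := by
    have hadd : HasDerivWithinAt (fun h => t + h) 1 (Ici 0) 0 :=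
      ((hasDerivAt_id (0 : ℝ)).const_add t).hasDerivWithinAt
    rw [← add_zero t] at hγ
    simpa [Function.comp_def] using
      HasDerivWithinAt.scomp (h := fun h => t + h) (0 : ℝ) hγ hadd
        (fun h hh => by simpa using hh)
  have hsup : HasDerivWithinAt (fun h => γ t ⊔ γ (t + h)) v⁺ (Ici 0) 0 := by
    rw [hasDerivWithinAt_pi] at hshift ⊢
    intro i
    simpa [posPart_def, max_comm] using hasDerivWithinAt_max_of_eq
      (hasDerivWithinAt_const 0 (Ici (0 : ℝ)) (γ t i)) (hshift i) (by simp)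
  have hH' : HasFDerivAt H L (γ t ⊔ γ (t + 0)) := by simpa using hH
  exact hH'.comp_hasDerivWithinAt 0 hsup

end Calculus

section Cooperative

variable {n : ℕ} {U : Set (Fin n → ℝ)} {f : (Fin n → ℝ) → (Fin n → ℝ)}
  {H : (Fin n → ℝ) → ℝ}

lemma coopVF.exists_sub_eq_sum_jacMat (hU : IsOpen U) (hUc : Convex ℝ U)
    (hf : ContDiffOn ℝ 1 f U) (hcoop : coopVF f U) {x y : Fin n → ℝ} (hx : x ∈ U) (hy : y ∈ U)
    (hxy : x ≤ y) {i : Fin n} (hi : x i = y i) :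
    ∃ z ∈ U, f y i - f x i = ∑ j, (y j - x j) * jacMat f z i j ∧
      ∀ j, 0 ≤ (y j - x j) * jacMat f z i j := by
  obtain ⟨z, hz, hfz⟩ := domain_mvt
    (fun w hw => (hasFDerivAt_pi'.1 (hasFDerivAt_of_contDiffOn hU hf hw) i).hasFDerivWithinAt)
    hUc hx hy
  have hzU : z ∈ U := hUc.segment_subset hx hy hz
  refine ⟨z, hzU, hfz.trans (apply_eq_sum_mul_apply_single _ _), fun j => ?_⟩
  rcases eq_or_ne i j with rfl | hij
  · simp [hi]
  · exact mul_nonneg (sub_nonneg.2 (hxy j)) (hcoop z hzU i j hij)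

lemma coopVF.apply_le_apply (hU : IsOpen U) (hUc : Convex ℝ U) (hf : ContDiffOn ℝ 1 f U)
    (hcoop : coopVF f U) {x y : Fin n → ℝ} (hx : x ∈ U) (hy : y ∈ U) (hxy : x ≤ y)
    {i : Fin n} (hi : x i = y i) : f x i ≤ f y i := by
  obtain ⟨z, -, hfz, hterm⟩ := hcoop.exists_sub_eq_sum_jacMat hU hUc hf hx hy hxy hi
  rw [← sub_nonneg, hfz]
  exact Finset.sum_nonneg fun j _ => hterm j

lemma coopVF.mul_sub_le_sub (hU : IsOpen U) (hUc : Convex ℝ U) (hf : ContDiffOn ℝ 1 f U)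
    (hcoop : coopVF f U) {x y : Fin n → ℝ} (hx : x ∈ U) (hy : y ∈ U) (hxy : x ≤ y)
    {i j : Fin n} (hi : x i = y i) {κ : ℝ} (hκ : ∀ z ∈ U, κ ≤ jacMat f z i j) :
    κ * (y j - x j) ≤ f y i - f x i := by
  obtain ⟨z, hz, hfz, hterm⟩ := hcoop.exists_sub_eq_sum_jacMat hU hUc hf hx hy hxy hi
  calc κ * (y j - x j) ≤ jacMat f z i j * (y j - x j) :=
        mul_le_mul_of_nonneg_right (hκ z hz) (sub_nonneg.2 (hxy j))
    _ = (y j - x j) * jacMat f z i j := mul_comm _ _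
    _ ≤ f y i - f x i := by
        rw [hfz]
        exact Finset.single_le_sum (fun k _ => hterm k) (Finset.mem_univ j)

lemma strictMonoOn_of_fderiv_single_pos (hU : IsOpen U) (hUc : Convex ℝ U)
    (hH : ContDiffOn ℝ 1 H U) (hgrad : ∀ x ∈ U, ∀ i, 0 < fderiv ℝ H x (Pi.single i 1)) :
    StrictMonoOn H U := by
  intro x hx y hy hxy
  obtain ⟨z, hz, hHz⟩ := domain_mvt
    (fun w hw => (hasFDerivAt_of_contDiffOn hU hH hw).hasFDerivWithinAt) hUc hx hy
  rw [← sub_pos, hHz]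
  exact apply_pos_of_pos (hgrad z (hUc.segment_subset hx hy hz)) (sub_pos.2 hxy)

lemma continuousAt_jacMat (hU : IsOpen U) (hf : ContDiffOn ℝ 1 f U) {x : Fin n → ℝ}
    (hx : x ∈ U) (i j : Fin n) : ContinuousAt (fun z => jacMat f z i j) x :=
  continuousAt_pi.1 ((continuousAt_fderiv_of_contDiffOn hU hf hx).clm_apply
    (continuousAt_const (y := Pi.single j 1))) i

lemma supClosed_ball {ι : Type*} [Fintype ι] (x : ι → ℝ) {r : ℝ} (hr : 0 < r) :
    SupClosed (Metric.ball x r) := by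
  rw [ball_pi x hr]
  exact supClosed_pi fun i _ => LinearOrder.supClosed _

end Cooperative

namespace IsSolOn

variable {n : ℕ} {X U : Set (Fin n → ℝ)} {f : (Fin n → ℝ) → (Fin n → ℝ)} {I J : Set ℝ}
  {γ : ℝ → Fin n → ℝ} {a b : ℝ}

lemma mono (hγ : IsSolOn f X I γ) (hJI : J ⊆ I) : IsSolOn f X J γ :=
  ⟨fun t ht => hγ.1 t (hJI ht), fun t ht => (hγ.2 t (hJI ht)).mono hJI⟩

lemma restrict (hγ : IsSolOn f X I γ) (hU : ∀ t ∈ I, γ t ∈ U) : IsSolOn f U I γ :=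
  ⟨hU, hγ.2⟩

lemma continuousOn (hγ : IsSolOn f X I γ) : ContinuousOn γ I :=
  fun t ht => (hγ.2 t ht).continuousWithinAt

lemma hasDerivWithinAt_Ici (hγ : IsSolOn f X (Icc a b) γ) {t : ℝ} (ht : t ∈ Ico a b) :
    HasDerivWithinAt γ (f (γ t)) (Ici t) t :=
  (hγ.2 t (Ico_subset_Icc_self ht)).mono_of_mem_nhdsWithin (Icc_mem_nhdsGE_of_mem ht)

lemma comp_add_const (hγ : IsSolOn f X I γ) (h : ℝ) (hJ : ∀ t ∈ J, t + h ∈ I) :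
    IsSolOn f X J fun t => γ (t + h) := by
  refine ⟨fun t ht => hγ.1 _ (hJ t ht), fun t ht => ?_⟩
  have hadd : HasDerivWithinAt (fun s => s + h) 1 J t :=
    ((hasDerivAt_id t).add_const h).hasDerivWithinAt
  simpa [Function.comp_def] using
    HasDerivWithinAt.scomp (h := fun s => s + h) t (hγ.2 _ (hJ t ht)) hadd hJ

lemma exists_restrict_Icc (hγ : IsSolOn f X (Icc a b) γ) {s : ℝ} (hs : s ∈ Ico a b)
    (hU : U ∈ 𝓝 (γ s)) : ∃ d ∈ Ioc s b, IsSolOn f U (Icc s d) γ := by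
  have hev : ∀ᶠ t in 𝓝[≥] s, γ t ∈ U ∧ t ∈ Icc a b :=
    ((hγ.hasDerivWithinAt_Ici hs).continuousWithinAt.eventually_mem hU).and
      (Icc_mem_nhdsGE_of_mem hs)
  obtain ⟨d, hd, hsub⟩ := mem_nhdsGE_iff_exists_Icc_subset.1 hev
  exact ⟨d, ⟨hd, (hsub (right_mem_Icc.2 (le_of_lt hd))).2.2⟩,
    (hγ.mono fun t ht => (hsub ht).2).restrict fun t ht => (hsub ht).1⟩

lemma apply_le_add_mul_sub (hγ : IsSolOn f X (Icc a b) γ) (hab : a ≤ b) {i : Fin n} {C : ℝ}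
    (hC : ∀ t ∈ Icc a b, f (γ t) i ≤ C) : γ b i ≤ γ a i + C * (b - a) :=
  le_add_mul_sub_of_deriv_right_le hab (continuousOn_pi.1 hγ.continuousOn i) fun t ht =>
    ⟨_, hC t (Ico_subset_Icc_self ht), hasDerivWithinAt_pi.1 (hγ.hasDerivWithinAt_Ici ht) i⟩

lemma add_mul_sub_le_apply (hγ : IsSolOn f X (Icc a b) γ) (hab : a ≤ b) {i : Fin n} {C : ℝ}
    (hC : ∀ t ∈ Icc a b, C ≤ f (γ t) i) : γ a i + C * (b - a) ≤ γ b i :=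
  add_mul_sub_le_of_le_deriv_right hab (continuousOn_pi.1 hγ.continuousOn i) fun t ht =>
    ⟨_, hC t (Ico_subset_Icc_self ht), hasDerivWithinAt_pi.1 (hγ.hasDerivWithinAt_Ici ht) i⟩

end IsSolOn

section FirstIntegral

variable {n : ℕ} {U : Set (Fin n → ℝ)} {f : (Fin n → ℝ) → (Fin n → ℝ)}
  {H : (Fin n → ℝ) → ℝ} {a b : ℝ}

lemma IsSolOn.eq_of_first_integral (hU : IsOpen U) (hH : ContDiffOn ℝ 1 H U)
    (hfi : ∀ x ∈ U, fderiv ℝ H x (f x) = 0) {γ : ℝ → Fin n → ℝ}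
    (hγ : IsSolOn f U (Icc a b) γ) (hab : a ≤ b) : H (γ b) = H (γ a) := by
  refine constant_of_has_deriv_right_zero (f := H ∘ γ)
    (hH.continuousOn.comp hγ.continuousOn hγ.1) (fun t ht => ?_) b (right_mem_Icc.2 hab)
  have htU := hγ.1 t (Ico_subset_Icc_self ht)
  simpa only [hfi _ htU] using
    (hasFDerivAt_of_contDiffOn hU hH htU).comp_hasDerivWithinAt t (hγ.hasDerivWithinAt_Ici ht)

lemma first_integral_le_sub_of_subsolution (hU : IsOpen U) (hH : ContDiffOn ℝ 1 H U)
    (hfi : ∀ x ∈ U, fderiv ℝ H x (f x) = 0)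
    (hgrad : ∀ x ∈ U, ∀ i, 0 ≤ fderiv ℝ H x (Pi.single i 1)) {m : ℝ → Fin n → ℝ}
    (hab : a ≤ b) (hm : ContinuousOn m (Icc a b)) (hmU : ∀ t ∈ Icc a b, m t ∈ U)
    {v : Fin n → ℝ} {C : ℝ} (hC : ∀ z ∈ U, C ≤ fderiv ℝ H z v)
    (hsub : ∀ t ∈ Ico a b, ∃ D, HasDerivWithinAt m D (Ici t) t ∧ D + v ≤ f (m t)) :
    H (m b) ≤ H (m a) - C * (b - a) := by
  have hslope := le_add_mul_sub_of_deriv_right_le (φ := H ∘ m) (C := -C) hab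
    (hH.continuousOn.comp hm hmU) fun t ht => ?_
  · simpa [sub_eq_add_neg] using hslope
  obtain ⟨D, hD, hDf⟩ := hsub t ht
  have htU := hmU t (Ico_subset_Icc_self ht)
  refine ⟨_, ?_, (hasFDerivAt_of_contDiffOn hU hH htU).comp_hasDerivWithinAt t hD⟩
  have hpos := apply_nonneg_of_nonneg (hgrad _ htU) (sub_nonneg.2 hDf)
  rw [map_sub, map_add, hfi _ htU] at hpos
  linarith [hC _ htU]

lemma IsSolOn.exists_hasDerivWithinAt_sup (hU : IsOpen U) (hUc : Convex ℝ U)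
    (hUs : SupClosed U) (hf : ContDiffOn ℝ 1 f U) (hcoop : coopVF f U) {x y : ℝ → Fin n → ℝ}
    (hx : IsSolOn f U (Icc a b) x) (hy : IsSolOn f U (Icc a b) y) {t : ℝ} (ht : t ∈ Ico a b) :
    ∃ D, HasDerivWithinAt (fun s => x s ⊔ y s) D (Ici t) t ∧ D ≤ f (x t ⊔ y t) := by
  have hxU := hx.1 t (Ico_subset_Icc_self ht)
  have hyU := hy.1 t (Ico_subset_Icc_self ht)
  choose D hD hcase using fun i => exists_hasDerivWithinAt_max
    (hasDerivWithinAt_pi.1 (hx.hasDerivWithinAt_Ici ht) i)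
    (hasDerivWithinAt_pi.1 (hy.hasDerivWithinAt_Ici ht) i)
  refine ⟨D, hasDerivWithinAt_pi.2 hD, fun i => ?_⟩
  rcases hcase i with ⟨hDi, hle⟩ | ⟨hDi, hle⟩ <;> rw [hDi]
  · exact hcoop.apply_le_apply hU hUc hf hxU (hUs hxU hyU) le_sup_left (max_eq_left hle).symm
  · exact hcoop.apply_le_apply hU hUc hf hyU (hUs hxU hyU) le_sup_right (max_eq_right hle).symm

lemma IsSolOn.exists_hasDerivWithinAt_sup_add_single_le (hU : IsOpen U) (hUc : Convex ℝ U)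
    (hUs : SupClosed U) (hf : ContDiffOn ℝ 1 f U) (hcoop : coopVF f U) {x y : ℝ → Fin n → ℝ}
    (hx : IsSolOn f U (Icc a b) x) (hy : IsSolOn f U (Icc a b) y) {i j : Fin n} {κ δ : ℝ}
    (hi : ∀ s ∈ Icc a b, y s i ≤ x s i) (hκ0 : 0 ≤ κ) (hκ : ∀ z ∈ U, κ ≤ jacMat f z i j) {t : ℝ}
    (ht : t ∈ Ico a b) (hδ : δ ≤ y t j - x t j) :
    ∃ D, HasDerivWithinAt (fun s => x s ⊔ y s) D (Ici t) t ∧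
      D + Pi.single i (κ * δ) ≤ f (x t ⊔ y t) := by
  obtain ⟨D, hD, hDf⟩ := hx.exists_hasDerivWithinAt_sup hU hUc hUs hf hcoop hy ht
  have htI := Ico_subset_Icc_self ht
  have hDi : D i = f (x t) i := by
    have hsup : (fun s => (x s ⊔ y s) i) =ᶠ[𝓝[≥] t] fun s => x s i := by
      filter_upwards [Icc_mem_nhdsGE_of_mem ht] with s hs using max_eq_left (hi s hs)
    exact (uniqueDiffWithinAt_Ici t).eq_deriv _
      ((hasDerivWithinAt_pi.1 hD i).congr_of_eventuallyEq_of_mem hsup.symm self_mem_Ici)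
      (hasDerivWithinAt_pi.1 (hx.hasDerivWithinAt_Ici ht) i)
  refine ⟨D, hD, fun k => ?_⟩
  rcases eq_or_ne k i with rfl | hki
  · have hmono := hcoop.mul_sub_le_sub hU hUc hf (hx.1 t htI) (hUs (hx.1 t htI) (hy.1 t htI))
      le_sup_left (max_eq_left (hi t htI)).symm hκ
    have hgap : κ * δ ≤ κ * ((x t ⊔ y t) j - x t j) :=
      mul_le_mul_of_nonneg_left (hδ.trans (sub_le_sub_right (le_max_right _ _) _)) hκ0
    simp only [Pi.add_apply, Pi.single_eq_same, hDi]
    linarith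
  · simpa [hki] using hDf k

end FirstIntegral

/-- `f` is a cooperative `C¹` vector field on the open set `X` and `H` is a `C¹` first integral of
`ẋ = f(x)` with positive gradient on `X`. -/
structure CoopFirstIntegral {n : ℕ} (f : (Fin n → ℝ) → (Fin n → ℝ)) (H : (Fin n → ℝ) → ℝ)
    (X : Set (Fin n → ℝ)) : Prop where
  isOpen : IsOpen X
  contDiffOn : ContDiffOn ℝ 1 f X
  coop : coopVF f X
  contDiffOn_integral : ContDiffOn ℝ 1 H X
  fderiv_apply_eq_zero : ∀ x ∈ X, fderiv ℝ H x (f x) = 0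
  fderiv_single_pos : ∀ x ∈ X, ∀ i, 0 < fderiv ℝ H x (Pi.single i 1)

/-- The function `x ↦ DH(x)[f(x)⁺]` attached to a vector field `f` with first integral `H`. It is a
Lyapunov function when `f` is cooperative and `H` has positive gradient; since
`DH(x)[f(x)] = 0` it is half the `DH(x)`-weighted `ℓ¹` norm of `f(x)`. -/
def lyapunov {n : ℕ} (f : (Fin n → ℝ) → (Fin n → ℝ)) (H : (Fin n → ℝ) → ℝ)
    (x : Fin n → ℝ) : ℝ :=
  fderiv ℝ H x (f x)⁺

lemma exists_eventually_setOf_pos_eq {α ι : Type*} [TopologicalSpace α] [Finite ι] {I : Set α}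
    {g : α → ι → ℝ} (hg : ContinuousOn g I) {a : α} (ha : a ∈ I) :
    ∃ s ∈ I, {i | 0 < g a i} ⊆ {i | 0 < g s i} ∧
      ∀ᶠ t in 𝓝[I] s, {i | 0 < g t i} = {i | 0 < g s i} := by
  have hfin : ((fun t => {i | 0 < g t i}) '' I).Finite := Set.toFinite _
  obtain ⟨-, hsub, ⟨s, hs, rfl⟩, hmax⟩ := hfin.exists_le_maximal (mem_image_of_mem _ ha)
  refine ⟨s, hs, hsub, ?_⟩
  have hlsc : ∀ᶠ t in 𝓝[I] s, ∀ i, 0 < g s i → 0 < g t i := eventually_all.2 fun i =>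
    eventually_imp_distrib_left.2 fun hi =>
      (continuousWithinAt_pi.1 (hg s hs) i).eventually_const_lt hi
  filter_upwards [hlsc, self_mem_nhdsWithin] with t ht htI
  exact Subset.antisymm (hmax (mem_image_of_mem _ htI) ht) ht

section Lyapunov

variable {n : ℕ} {X U : Set (Fin n → ℝ)} {f : (Fin n → ℝ) → (Fin n → ℝ)}
  {H : (Fin n → ℝ) → ℝ} {x : ℝ → Fin n → ℝ} {a b : ℝ}

lemma CoopFirstIntegral.mono (hfH : CoopFirstIntegral f H X) (hU : IsOpen U) (hUX : U ⊆ X) :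
    CoopFirstIntegral f H U where
  isOpen := hU
  contDiffOn := hfH.contDiffOn.mono hUX
  coop := fun z hz => hfH.coop z (hUX hz)
  contDiffOn_integral := hfH.contDiffOn_integral.mono hUX
  fderiv_apply_eq_zero := fun z hz => hfH.fderiv_apply_eq_zero z (hUX hz)
  fderiv_single_pos := fun z hz => hfH.fderiv_single_pos z (hUX hz)

lemma continuousOn_lyapunov (hU : IsOpen U) (hf : ContDiffOn ℝ 1 f U)
    (hH : ContDiffOn ℝ 1 H U) : ContinuousOn (lyapunov f H) U :=
  (hH.continuousOn_fderiv_of_isOpen hU le_rfl).clm_apply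
    (hf.continuousOn.sup continuousOn_const)

/- The comparison of `H (x t ⊔ x (t + h))` at two times is divided by `h → 0⁺`; both sides agree at
`h = 0` because `H` is constant along `x`. -/
lemma IsSolOn.lyapunov_le_sub (hU : IsOpen U) (hH : ContDiffOn ℝ 1 H U)
    (hfi : ∀ x ∈ U, fderiv ℝ H x (f x) = 0) (hx : IsSolOn f U (Icc a b) x) {t C : ℝ}
    (ht : t ∈ Ico a b)
    (hsup : ∀ h ∈ Ioo 0 (b - t), H (x t ⊔ x (t + h)) ≤ H (x a ⊔ x (a + h)) - h * C) :
    lyapunov f H (x t) ≤ lyapunov f H (x a) - C := by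
  have hderiv {s : ℝ} (hs : s ∈ Ico a b) : HasDerivWithinAt (fun h => H (x s ⊔ x (s + h)))
      (lyapunov f H (x s)) (Ici 0) 0 :=
    hasDerivWithinAt_comp_sup_shift
      (hasFDerivAt_of_contDiffOn hU hH (hx.1 s (Ico_subset_Icc_self hs)))
      (hx.hasDerivWithinAt_Ici hs)
  have hlin : HasDerivWithinAt (fun h => h * C) C (Ici 0) 0 := by
    simpa using ((hasDerivAt_id (0 : ℝ)).mul_const C).hasDerivWithinAt
  have hat : a ∈ Ico a b := ⟨le_rfl, ht.1.trans_lt ht.2⟩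
  refine le_of_hasDerivWithinAt_of_eventually_le (hderiv ht) ((hderiv hat).sub hlin) ?_ ?_
  · simpa using (hx.mono (Icc_subset_Icc_right ht.2.le)).eq_of_first_integral hU hH hfi ht.1
  · filter_upwards [Ioo_mem_nhdsGT (sub_pos.2 ht.2)] with h hh using hsup h hh

lemma IsSolOn.first_integral_sup_le (hfH : CoopFirstIntegral f H U) (hUc : Convex ℝ U)
    (hUs : SupClosed U) {y : ℝ → Fin n → ℝ} (hx : IsSolOn f U (Icc a b) x)
    (hy : IsSolOn f U (Icc a b) y) (hab : a ≤ b) : H (x b ⊔ y b) ≤ H (x a ⊔ y a) := by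
  simpa using first_integral_le_sub_of_subsolution (v := 0) (C := 0) hfH.isOpen
    hfH.contDiffOn_integral hfH.fderiv_apply_eq_zero
    (fun z hz i => (hfH.fderiv_single_pos z hz i).le) hab
    (hx.continuousOn.sup hy.continuousOn) (fun t ht => hUs (hx.1 t ht) (hy.1 t ht))
    (fun z _ => (map_zero _).ge)
    fun t ht => by
      simpa using hx.exists_hasDerivWithinAt_sup hfH.isOpen hUc hUs hfH.contDiffOn hfH.coop hy ht

lemma IsSolOn.lyapunov_le_of_supClosed (hfH : CoopFirstIntegral f H U) (hUc : Convex ℝ U)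
    (hUs : SupClosed U) (hx : IsSolOn f U (Icc a b) x) {t : ℝ} (ht : t ∈ Ico a b) :
    lyapunov f H (x t) ≤ lyapunov f H (x a) := by
  simpa using hx.lyapunov_le_sub (C := 0) hfH.isOpen hfH.contDiffOn_integral
    hfH.fderiv_apply_eq_zero ht fun h hh => by
      simpa using (hx.mono (Icc_subset_Icc_right ht.2.le)).first_integral_sup_le hfH hUc hUs
        (hx.comp_add_const h fun s hs =>
          ⟨by linarith [hs.1, hh.1], by linarith [hs.2, hh.2]⟩) ht.1

/- `H` is only `C¹`, so `lyapunov f H` need not be differentiable along `x`: monotonicity follows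
from its local comparison to the right of every time. -/
lemma IsSolOn.lyapunov_le (hfH : CoopFirstIntegral f H X) (hx : IsSolOn f X (Icc a b) x)
    (hab : a ≤ b) : lyapunov f H (x b) ≤ lyapunov f H (x a) := by
  refine le_of_eventually_right_le hab
    ((continuousOn_lyapunov hfH.isOpen hfH.contDiffOn hfH.contDiffOn_integral).comp
      hx.continuousOn hx.1) fun s hs => ?_
  obtain ⟨r, hr, hrX⟩ := Metric.isOpen_iff.1 hfH.isOpen _ (hx.1 s (Ico_subset_Icc_self hs))
  obtain ⟨d, hd, hxd⟩ := hx.exists_restrict_Icc hs (Metric.ball_mem_nhds (x s) hr)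
  filter_upwards [Ioo_mem_nhdsGT hd.1] with t ht
  exact hxd.lyapunov_le_of_supClosed (hfH.mono Metric.isOpen_ball hrX) (convex_ball _ _)
    (supClosed_ball _ hr) (Ioo_subset_Ico_self ht)

lemma IsSolOn.lyapunov_le_sub_of_bounds (hfH : CoopFirstIntegral f H U) (hUc : Convex ℝ U)
    (hUs : SupClosed U) (hx : IsSolOn f U (Icc a b) x) {i j : Fin n} {κ δ η : ℝ}
    (hκ0 : 0 ≤ κ) (hκ : ∀ z ∈ U, κ ≤ jacMat f z i j) (hδ0 : 0 ≤ δ)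
    (hη : ∀ z ∈ U, η ≤ fderiv ℝ H z (Pi.single i 1))
    (hi : ∀ t ∈ Icc a b, f (x t) i ≤ 0) (hj : ∀ t ∈ Icc a b, δ ≤ f (x t) j)
    {t : ℝ} (ht : t ∈ Ico a b) :
    lyapunov f H (x t) ≤ lyapunov f H (x a) - κ * δ * η * (t - a) := by
  refine hx.lyapunov_le_sub hfH.isOpen hfH.contDiffOn_integral hfH.fderiv_apply_eq_zero ht
    fun h hh => ?_
  have hxt : IsSolOn f U (Icc a t) x := hx.mono (Icc_subset_Icc_right ht.2.le)
  have hyt : IsSolOn f U (Icc a t) fun s => x (s + h) := hx.comp_add_const h fun s hs =>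
    ⟨by linarith [hs.1, hh.1], by linarith [hs.2, hh.2]⟩
  have hincr {s : ℝ} (hs : s ∈ Icc a t) :
      x (s + h) i ≤ x s i ∧ δ * h ≤ x (s + h) j - x s j := by
    have hss : s ≤ s + h := by linarith [hh.1]
    have hsub : Icc s (s + h) ⊆ Icc a b := Icc_subset_Icc hs.1 (by linarith [hs.2, hh.2])
    have hdec := (hx.mono hsub).apply_le_add_mul_sub hss fun q hq => hi q (hsub hq)
    have hinc := (hx.mono hsub).add_mul_sub_le_apply hss fun q hq => hj q (hsub hq)
    constructor <;> linarith
  have hdrop := first_integral_le_sub_of_subsolution (C := κ * (δ * h) * η) hfH.isOpen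
    hfH.contDiffOn_integral hfH.fderiv_apply_eq_zero
    (fun z hz k => (hfH.fderiv_single_pos z hz k).le) ht.1
    (hxt.continuousOn.sup hyt.continuousOn) (fun s hs => hUs (hxt.1 s hs) (hyt.1 s hs))
    (v := Pi.single i (κ * (δ * h))) (fun z hz => ?_) fun s hs =>
      hxt.exists_hasDerivWithinAt_sup_add_single_le hfH.isOpen hUc hUs hfH.contDiffOn hfH.coop hyt
        (fun q hq => (hincr hq).1) hκ0 hκ hs (hincr (Ico_subset_Icc_self hs)).2
  · linarith
  · have hsingle : (Pi.single i (κ * (δ * h)) : Fin n → ℝ) =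
        (κ * (δ * h)) • Pi.single i (1 : ℝ) := by simp [← Pi.single_smul]
    rw [hsingle, map_smul, smul_eq_mul]
    exact mul_le_mul_of_nonneg_left (hη z hz) (mul_nonneg hκ0 (mul_nonneg hδ0 hh.1.le))

lemma IsSolOn.exists_lyapunov_lt_of_signs (hfH : CoopFirstIntegral f H X)
    (hx : IsSolOn f X (Icc a b) x) (hab : a < b) {i j : Fin n}
    (hi : ∀ t ∈ Icc a b, f (x t) i ≤ 0) (hj : 0 < f (x a) j) (hij : 0 < jacMat f (x a) i j) :
    ∃ t ∈ Icc a b, lyapunov f H (x t) < lyapunov f H (x a) := by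
  have haX : x a ∈ X := hx.1 a (left_mem_Icc.2 hab.le)
  have hη := hfH.fderiv_single_pos _ haX i
  have hjac := (continuousAt_jacMat hfH.isOpen hfH.contDiffOn haX i j).eventually_const_lt
    (half_lt_self hij)
  have hvel := (continuousAt_pi.1 (hasFDerivAt_of_contDiffOn hfH.isOpen hfH.contDiffOn
    haX).continuousAt j).eventually_const_lt (half_lt_self hj)
  have hgrad := ((continuousAt_fderiv_of_contDiffOn hfH.isOpen hfH.contDiffOn_integral
    haX).clm_apply (continuousAt_const (y := Pi.single i 1))).eventually_const_lt
    (half_lt_self hη)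
  obtain ⟨r, hr, hball⟩ := Metric.eventually_nhds_iff_ball.1
    (((hfH.isOpen.eventually_mem haX).and hjac).and (hvel.and hgrad))
  obtain ⟨d, hd, hxd⟩ := hx.exists_restrict_Icc (left_mem_Ico.2 hab) (Metric.ball_mem_nhds _ hr)
  have hsub : Icc a d ⊆ Icc a b := Icc_subset_Icc_right hd.2
  have hmid : (a + d) / 2 ∈ Ico a d := ⟨by linarith [hd.1], by linarith [hd.1]⟩
  have hdrop := hxd.lyapunov_le_sub_of_bounds
    (hfH.mono Metric.isOpen_ball fun z hz => (hball z hz).1.1) (convex_ball _ _)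
    (supClosed_ball _ hr) (half_pos hij).le (fun z hz => (hball z hz).1.2.le) (half_pos hj).le
    (fun z hz => (hball z hz).2.2.le) (fun t ht => hi t (hsub ht))
    (fun t ht => (hball _ (hxd.1 t ht)).2.1.le) hmid
  have hpos : 0 < jacMat f (x a) i j / 2 * (f (x a) j / 2) *
      (fderiv ℝ H (x a) (Pi.single i 1) / 2) * ((a + d) / 2 - a) :=
    mul_pos (mul_pos (mul_pos (half_pos hij) (half_pos hj)) (half_pos hη)) (by linarith [hd.1])
  exact ⟨_, hsub (Ico_subset_Icc_self hmid), by linarith⟩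

lemma CoopFirstIntegral.exists_jacMat_pos (hfH : CoopFirstIntegral f H X) {z : Fin n → ℝ}
    (hz : z ∈ X) (hirr : matIrred (jacMat f z)) (hne : f z ≠ 0) :
    ∃ i j, f z i ≤ 0 ∧ 0 < f z j ∧ 0 < jacMat f z i j := by
  have hL := hfH.fderiv_single_pos z hz
  have hfz := hfH.fderiv_apply_eq_zero z hz
  obtain ⟨k, hk⟩ := exists_pos_of_apply_eq_zero hL hne hfz
  obtain ⟨l, hl⟩ := exists_pos_of_apply_eq_zero hL (neg_ne_zero.2 hne)
    (by rw [map_neg, hfz, neg_zero])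
  obtain ⟨i, hi, j, hj, hij⟩ := hirr {i | f z i ≤ 0} ⟨l, (neg_pos.1 hl).le⟩
    fun h => (h ▸ mem_univ k : k ∈ {i | f z i ≤ 0}).not_gt hk
  exact ⟨i, j, hi, not_le.1 hj, (hfH.coop z hz i j fun h => hj (h ▸ hi)).lt_of_ne' hij⟩

/- On a time interval where the set of growing coordinates is constant, irreducibility couples a
coordinate that does not grow to one that does. -/
lemma IsSolOn.exists_lyapunov_lt (hfH : CoopFirstIntegral f H X)
    (hirr : ∀ x ∈ X, matIrred (jacMat f x)) (hx : IsSolOn f X (Icc a b) x) (hab : a < b)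
    (hne : f (x a) ≠ 0) : ∃ t ∈ Icc a b, lyapunov f H (x t) < lyapunov f H (x a) := by
  have hfx : ContinuousOn (fun t => f (x t)) (Ico a b) :=
    (hfH.contDiffOn.continuousOn.comp hx.continuousOn hx.1).mono Ico_subset_Icc_self
  obtain ⟨s, hs, hsub, hev⟩ := exists_eventually_setOf_pos_eq hfx (left_mem_Ico.2 hab)
  have haX : x a ∈ X := hx.1 a (left_mem_Icc.2 hab.le)
  have hsX : x s ∈ X := hx.1 s (Ico_subset_Icc_self hs)
  have hne_s : f (x s) ≠ 0 := by
    obtain ⟨k, hk⟩ := exists_pos_of_apply_eq_zero (hfH.fderiv_single_pos _ haX) hne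
      (hfH.fderiv_apply_eq_zero _ haX)
    exact fun h0 => (hsub hk : 0 < f (x s) k).ne' (congrFun h0 k)
  obtain ⟨i, j, hi, hj, hij⟩ := hfH.exists_jacMat_pos hsX (hirr _ hsX) hne_s
  obtain ⟨d, hd, hsd⟩ := mem_nhdsGE_iff_exists_Icc_subset.1
    ((hev.filter_mono (nhdsWithin_le_of_mem (Ico_mem_nhdsGE_of_mem hs))).and
      (Ico_mem_nhdsGE_of_mem hs))
  have hdI : Icc s d ⊆ Icc a b := fun t ht => Ico_subset_Icc_self (hsd ht).2
  have hi_le : ∀ t ∈ Icc s d, f (x t) i ≤ 0 := fun t ht =>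
    not_lt.1 fun hpos => hi.not_gt ((hsd ht).1 ▸ hpos : i ∈ {i | 0 < f (x s) i})
  obtain ⟨t, ht, hlt⟩ := (hx.mono hdI).exists_lyapunov_lt_of_signs hfH hd hi_le hj hij
  exact ⟨t, hdI ht, hlt.trans_le
    ((hx.mono (Icc_subset_Icc_right hs.2.le)).lyapunov_le hfH hs.1)⟩

end Lyapunov

section Equilibria

variable {n : ℕ} {X U : Set (Fin n → ℝ)} {f : (Fin n → ℝ) → (Fin n → ℝ)}
  {H : (Fin n → ℝ) → ℝ} {y z : Fin n → ℝ}

lemma CoopFirstIntegral.apply_sup_eq_zero (hfH : CoopFirstIntegral f H U) (hUc : Convex ℝ U)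
    (hUs : SupClosed U) (hy : y ∈ U) (hz : z ∈ U) (hfy : f y = 0) (hfz : f z = 0) :
    f (y ⊔ z) = 0 := by
  have hyz : y ⊔ z ∈ U := hUs hy hz
  refine eq_zero_of_nonneg_of_apply_eq_zero (hfH.fderiv_single_pos _ hyz) (fun i => ?_)
    (hfH.fderiv_apply_eq_zero _ hyz)
  rcases le_total (z i) (y i) with hle | hle
  · simpa only [hfy] using hfH.coop.apply_le_apply hfH.isOpen hUc hfH.contDiffOn hy hyz
      le_sup_left (max_eq_left hle).symm
  · simpa only [hfz] using hfH.coop.apply_le_apply hfH.isOpen hUc hfH.contDiffOn hz hyz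
      le_sup_right (max_eq_right hle).symm

lemma coopVF.eq_or_forall_lt_of_le (hU : IsOpen U) (hUc : Convex ℝ U)
    (hf : ContDiffOn ℝ 1 f U) (hcoop : coopVF f U) (hirr : matIrred (jacMat f y))
    (hjac : ∀ w ∈ U, ∀ i j, 0 < jacMat f y i j → 0 < jacMat f w i j)
    (hy : y ∈ U) (hz : z ∈ U) (hfyz : f y = f z) (hyz : y ≤ z) : y = z ∨ ∀ i, y i < z i := by
  by_contra! ⟨hne, k, hk⟩
  obtain ⟨i, hi, j, hj, hij⟩ := hirr {i | y i = z i} ⟨k, (hyz k).antisymm hk⟩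
    fun h => hne (funext fun i => (h ▸ mem_univ i : i ∈ {i | y i = z i}))
  have hij_pos : 0 < jacMat f y i j := (hcoop y hy i j fun h => hj (h ▸ hi)).lt_of_ne' hij
  obtain ⟨w, hw, hsum, hterm⟩ := hcoop.exists_sub_eq_sum_jacMat hU hUc hf hy hz hyz hi
  have hpos : 0 < f z i - f y i := hsum ▸ Finset.sum_pos' (fun l _ => hterm l)
    ⟨j, Finset.mem_univ j, mul_pos (sub_pos.2 ((hyz j).lt_of_ne hj)) (hjac w hw i j hij_pos)⟩
  exact hpos.ne' (by rw [hfyz, sub_self])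

lemma CoopFirstIntegral.eventually_eq_of_equilibrium (hfH : CoopFirstIntegral f H X) (hy : y ∈ X)
    (hirr : matIrred (jacMat f y)) (hfy : f y = 0) :
    ∀ᶠ z in 𝓝 y, f z = 0 → H z = H y → z = y := by
  have hjac : ∀ᶠ w in 𝓝 y, ∀ i j, 0 < jacMat f y i j → 0 < jacMat f w i j := by
    simp only [eventually_all]
    exact fun i j hij =>
      (continuousAt_jacMat hfH.isOpen hfH.contDiffOn hy i j).eventually_const_lt hij
  obtain ⟨r, hr, hball⟩ := Metric.eventually_nhds_iff_ball.1
    ((hfH.isOpen.eventually_mem hy).and hjac)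
  have hUc : Convex ℝ (Metric.ball y r) := convex_ball y r
  have hUs : SupClosed (Metric.ball y r) := supClosed_ball y hr
  have hU : CoopFirstIntegral f H (Metric.ball y r) :=
    hfH.mono Metric.isOpen_ball fun z hz => (hball z hz).1
  have hyU : y ∈ Metric.ball y r := Metric.mem_ball_self hr
  have hH : StrictMonoOn H (Metric.ball y r) :=
    strictMonoOn_of_fderiv_single_pos hU.isOpen hUc hU.contDiffOn_integral hU.fderiv_single_pos
  filter_upwards [Metric.ball_mem_nhds y hr] with z hz hfz hHz
  have hsup : y = y ⊔ z ∨ ∀ i, y i < (y ⊔ z) i :=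
    hU.coop.eq_or_forall_lt_of_le hU.isOpen hUc hU.contDiffOn hirr (fun w hw => (hball w hw).2) hyU
      (hUs hyU hz) (by rw [hfy, hU.apply_sup_eq_zero hUc hUs hyU hz hfy hfz]) le_sup_left
  have hcomp : z ≤ y ∨ y ≤ z := hsup.imp (fun h => sup_eq_left.1 h.symm) fun h i =>
    ((lt_max_iff.1 (h i)).resolve_left (lt_irrefl _)).le
  rcases hcomp with hle | hle
  · exact hle.eq_of_not_lt fun hlt => (hH hz hyU hlt).ne hHz
  · exact hle.eq_of_not_lt' fun hlt => (hH hyU hz hlt).ne' hHz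

end Equilibria

section ContinuousDependence

variable {n : ℕ} {X S : Set (Fin n → ℝ)} {f : (Fin n → ℝ) → (Fin n → ℝ)} {a b : ℝ}
  {y : Fin n → ℝ}

lemma IsSolOn.isSolOn_closedBall {γ : ℝ → Fin n → ℝ} {R M : ℝ}
    (hγ : IsSolOn f X (Icc a b) γ) (hM : ∀ z ∈ Metric.closedBall y R, ‖f z‖ < M) (hM0 : 0 ≤ M)
    (hR : dist (γ a) y + M * (b - a) ≤ R) : IsSolOn f (Metric.closedBall y R) (Icc a b) γ := by
  have hbound {t : ℝ} (ht : t ≤ b) : dist (γ a) y + M * (t - a) ≤ R :=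
    (add_le_add_right (mul_le_mul_of_nonneg_left (sub_le_sub_right ht a) hM0) _).trans hR
  refine hγ.restrict fun t ht => mem_closedBall_iff_norm.2 (le_trans ?_ (hbound ht.2))
  refine image_norm_le_of_norm_deriv_right_lt_deriv_boundary (f := fun t => γ t - y)
    (f' := fun t => f (γ t)) (B := fun t => dist (γ a) y + M * (t - a)) (B' := fun _ => M)
    (hγ.continuousOn.sub continuousOn_const)
    (fun t ht => (hγ.hasDerivWithinAt_Ici ht).sub_const y) ?_ (fun t => ?_) (fun t ht h => ?_) ht
  · simp [dist_eq_norm]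
  · simpa using (((hasDerivAt_id t).sub_const a).const_mul M).const_add (dist (γ a) y)
  · exact hM _ (mem_closedBall_iff_norm.2 (h.trans_le (hbound ht.2.le)))

lemma IsSolOn.dist_le_mul_exp {K : NNReal} (hf : LipschitzOnWith K f S) {x ξ : ℝ → Fin n → ℝ}
    (hx : IsSolOn f S (Icc a b) x) (hξ : IsSolOn f S (Icc a b) ξ) {t : ℝ} (ht : t ∈ Icc a b) :
    dist (x t) (ξ t) ≤ dist (x a) (ξ a) * Real.exp (K * (t - a)) :=
  dist_le_of_trajectories_ODE_of_mem (v := fun _ => f) (s := fun _ => S) (fun _ _ => hf)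
    hx.continuousOn (fun _ hs => hx.hasDerivWithinAt_Ici hs)
    (fun s hs => hx.1 s (Ico_subset_Icc_self hs)) hξ.continuousOn
    (fun _ hs => hξ.hasDerivWithinAt_Ici hs) (fun s hs => hξ.1 s (Ico_subset_Icc_self hs))
    le_rfl t ht

lemma exists_isSolOn_Icc (hX : IsOpen X) (hf : ContDiffOn ℝ 1 f X) (hy : y ∈ X) :
    ∃ ε > 0, ∃ ξ : ℝ → Fin n → ℝ, ξ 0 = y ∧ IsSolOn f X (Icc 0 ε) ξ := by
  have hfy : ContDiffAt ℝ 1 f y := hf.contDiffAt (hX.mem_nhds hy)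
  obtain ⟨r, hr, δ, hδ, hex⟩ :=
    hfy.exists_forall_mem_closedBall_exists_eq_forall_mem_Ioo_hasDerivAt 0
  obtain ⟨ξ, hξ0, hξ⟩ := hex y (Metric.mem_closedBall_self hr.le)
  have hsol : IsSolOn f univ (Icc 0 (δ / 2)) ξ := ⟨fun _ _ => mem_univ _, fun t ht =>
    (hξ t ⟨by linarith [ht.1], by linarith [ht.2]⟩).hasDerivWithinAt⟩
  obtain ⟨ε, hε, hξX⟩ := hsol.exists_restrict_Icc (left_mem_Ico.2 (half_pos hδ))
    (hξ0.symm ▸ hX.mem_nhds hy)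
  exact ⟨ε, hε.1, ξ, hξ0, hξX⟩

lemma exists_isSolOn_forall_dist_le (hX : IsOpen X) (hf : ContDiffOn ℝ 1 f X) (hy : y ∈ X) :
    ∃ τ > 0, ∃ ξ : ℝ → Fin n → ℝ, ξ 0 = y ∧ IsSolOn f X (Icc 0 τ) ξ ∧ ∃ C, ∃ ρ > 0,
      ∀ x, IsSolOn f X (Icc 0 τ) x → dist (x 0) y ≤ ρ →
        ∀ s ∈ Icc 0 τ, dist (x s) (ξ s) ≤ dist (x 0) y * C := by
  have hfy : ContDiffAt ℝ 1 f y := hf.contDiffAt (hX.mem_nhds hy)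
  obtain ⟨K, S, hS, hlip⟩ := hfy.exists_lipschitzOnWith
  have hbdd : ∀ᶠ z in 𝓝 y, ‖f z‖ < ‖f y‖ + 1 :=
    hfy.continuousAt.norm.eventually_lt_const (lt_add_one _)
  obtain ⟨R, hR, hRS⟩ := Metric.nhds_basis_closedBall.mem_iff.1 (inter_mem hS hbdd)
  obtain ⟨ε, hε, ξ, hξ0, hξ⟩ := exists_isSolOn_Icc hX hf hy
  set M := ‖f y‖ + 1
  have hM : 0 < M := by positivity
  set τ := min ε (R / 2 / M)
  have hMτ : M * (τ - 0) ≤ R / 2 := by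
    rw [sub_zero, ← le_div_iff₀' hM]
    exact min_le_right _ _
  have hξτ : IsSolOn f X (Icc 0 τ) ξ := hξ.mono (Icc_subset_Icc_right (min_le_left _ _))
  have hball {x : ℝ → Fin n → ℝ} (hx : IsSolOn f X (Icc 0 τ) x) (hx0 : dist (x 0) y ≤ R / 2) :
      IsSolOn f (Metric.closedBall y R) (Icc 0 τ) x :=
    hx.isSolOn_closedBall (fun z hz => (hRS hz).2) hM.le (by linarith)
  refine ⟨τ, by positivity, ξ, hξ0, hξτ, Real.exp (K * τ), R / 2, half_pos hR,
    fun x hx hx0 s hs => ?_⟩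
  have hdist := (hball hx hx0).dist_le_mul_exp (hlip.mono fun z hz => (hRS hz).1)
    (hball hξτ (by rw [hξ0, dist_self]; positivity)) hs
  rw [hξ0, sub_zero] at hdist
  exact hdist.trans (by gcongr; exact hs.2)

end ContinuousDependence

section OmegaLimit

variable {n : ℕ} {X : Set (Fin n → ℝ)} {f : (Fin n → ℝ) → (Fin n → ℝ)}
  {H : (Fin n → ℝ) → ℝ} {γ : ℝ → Fin n → ℝ} {y z : Fin n → ℝ}

lemma mem_omegaSet_iff : y ∈ omegaSet X γ ↔ y ∈ X ∧ MapClusterPt y atTop γ := by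
  refine and_congr_right fun _ => ⟨?_, fun h => ?_⟩
  · rintro ⟨t, ht, hty⟩
    exact MapClusterPt.of_comp ht hty.mapClusterPt
  · obtain ⟨t, hty, ht⟩ := h.exists_seq_tendsto
    exact ⟨t, ht, hty⟩

lemma le_of_mem_omegaSet_of_antitoneOn (hX : IsOpen X) {g : (Fin n → ℝ) → ℝ}
    (hg : ContinuousOn g X) (hanti : AntitoneOn (fun t => g (γ t)) (Ici 0))
    (hy : y ∈ omegaSet X γ) (hz : z ∈ omegaSet X γ) : g y ≤ g z := by
  obtain ⟨hyX, t, ht, hty⟩ := hy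
  obtain ⟨hzX, s, hs, hsz⟩ := hz
  have hlim {w : Fin n → ℝ} (hw : w ∈ X) : Tendsto g (𝓝 w) (𝓝 (g w)) :=
    hg.continuousAt (hX.mem_nhds hw)
  refine ge_of_tendsto ((hlim hzX).comp hsz) ?_
  filter_upwards [hs.eventually_ge_atTop 0] with k hk
  refine le_of_tendsto ((hlim hyX).comp hty) ?_
  filter_upwards [ht.eventually_ge_atTop (s k)] with l hl
  exact hanti hk (hk.trans hl) hl

lemma exists_mem_omegaSet_dist_eq (hγ : ContinuousOn γ (Ici 0)) (hy : y ∈ omegaSet X γ)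
    (hz : z ∈ omegaSet X γ) {r : ℝ} (hr : 0 < r) (hrz : r < dist z y)
    (hrX : Metric.closedBall y r ⊆ X) : ∃ w ∈ omegaSet X γ, dist w y = r := by
  rw [mem_omegaSet_iff] at hy hz
  have hnear : ∃ᶠ t in atTop, dist (γ t) y < r :=
    hy.2.frequently (Metric.ball_mem_nhds y hr)
  have hfar : ∃ᶠ t in atTop, r < dist (γ t) y :=
    hz.2.frequently ((continuous_id.dist continuous_const).continuousAt.eventually_const_lt hrz)
  have hsphere : ∃ᶠ t in atTop, γ t ∈ Metric.sphere y r := by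
    refine frequently_atTop.2 fun a => ?_
    obtain ⟨s, hs, hsr⟩ := frequently_atTop.1 hnear (max a 0)
    obtain ⟨t, ht, htr⟩ := frequently_atTop.1 hfar s
    have hs0 : 0 ≤ s := (le_max_right _ _).trans hs
    have hdist : ContinuousOn (fun q => dist (γ q) y) (Icc s t) :=
      (continuous_id.dist continuous_const).comp_continuousOn
        (hγ.mono (Icc_subset_Ici_self.trans (Ici_subset_Ici.2 hs0)))
    obtain ⟨q, hq, hqr⟩ := intermediate_value_Icc ht hdist ⟨hsr.le, htr.le⟩
    exact ⟨q, ((le_max_left _ _).trans hs).trans hq.1, hqr⟩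
  obtain ⟨w, hw, hcluster⟩ := (isCompact_sphere y r).exists_mapClusterPt_of_frequently hsphere
  exact ⟨w, mem_omegaSet_iff.2 ⟨hrX (Metric.sphere_subset_closedBall hw), hcluster⟩, hw⟩

lemma eq_of_mem_omegaSet_of_isolated (hX : IsOpen X) (hγ : ContinuousOn γ (Ici 0))
    (hy : y ∈ omegaSet X γ) (hiso : ∀ᶠ w in 𝓝 y, w ∈ omegaSet X γ → w = y)
    (hz : z ∈ omegaSet X γ) : z = y := by
  by_contra hne
  obtain ⟨ε, hε, hball⟩ := Metric.eventually_nhds_iff_ball.1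
    ((hX.eventually_mem hy.1).and hiso)
  obtain ⟨r, hr, hrlt⟩ := exists_between (lt_min hε (dist_pos.2 hne))
  have hrε : Metric.closedBall y r ⊆ Metric.ball y ε :=
    Metric.closedBall_subset_ball (hrlt.trans_le (min_le_left _ _))
  obtain ⟨w, hw, hwr⟩ := exists_mem_omegaSet_dist_eq hγ hy hz hr
    (hrlt.trans_le (min_le_right _ _)) fun v hv => (hball v (hrε hv)).1
  have hwy : w = y := (hball w (hrε hwr.le)).2 hw
  exact hr.ne (by rw [← hwr, hwy, dist_self])

lemma exists_isSolOn_forall_mem_omegaSet (hX : IsOpen X) (hf : ContDiffOn ℝ 1 f X)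
    (hγ : IsSolOn f X (Ici 0) γ) (hy : y ∈ omegaSet X γ) :
    ∃ τ > 0, ∃ ξ : ℝ → Fin n → ℝ,
      ξ 0 = y ∧ IsSolOn f X (Icc 0 τ) ξ ∧ ∀ s ∈ Icc 0 τ, ξ s ∈ omegaSet X γ := by
  obtain ⟨hyX, t, ht, hty⟩ := hy
  obtain ⟨τ, hτ, ξ, hξ0, hξ, C, ρ, hρ, hdist⟩ := exists_isSolOn_forall_dist_le hX hf hyX
  refine ⟨τ, hτ, ξ, hξ0, hξ, fun s hs =>
    ⟨hξ.1 s hs, fun k => s + t k, tendsto_atTop_add_const_left _ s ht, ?_⟩⟩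
  have hlim : Tendsto (fun k => dist (γ (t k)) y * C) atTop (𝓝 0) := by
    simpa using (tendsto_iff_dist_tendsto_zero.1 hty).mul_const C
  refine tendsto_iff_dist_tendsto_zero.2
    (squeeze_zero' (Eventually.of_forall fun _ => dist_nonneg) ?_ hlim)
  filter_upwards [ht.eventually_ge_atTop 0, hty.eventually (Metric.closedBall_mem_nhds y hρ)]
    with k hk hky
  have hshift : IsSolOn f X (Icc 0 τ) fun q => γ (q + t k) :=
    hγ.comp_add_const (t k) fun q hq => add_nonneg hq.1 hk
  simpa using hdist _ hshift (by simpa using hky) s hs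

lemma CoopFirstIntegral.antitoneOn_lyapunov (hfH : CoopFirstIntegral f H X)
    (hγ : IsSolOn f X (Ici 0) γ) : AntitoneOn (fun t => lyapunov f H (γ t)) (Ici 0) :=
  fun _ hs _ _ hst =>
    (hγ.mono (Icc_subset_Ici_self.trans (Ici_subset_Ici.2 hs))).lyapunov_le hfH hst

lemma CoopFirstIntegral.apply_eq_zero_of_mem_omegaSet (hfH : CoopFirstIntegral f H X)
    (hirr : ∀ x ∈ X, matIrred (jacMat f x)) (hγ : IsSolOn f X (Ici 0) γ)
    (hy : y ∈ omegaSet X γ) : f y = 0 := by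
  obtain ⟨τ, hτ, ξ, rfl, hξ, hξω⟩ :=
    exists_isSolOn_forall_mem_omegaSet hfH.isOpen hfH.contDiffOn hγ hy
  by_contra hne
  obtain ⟨t, ht, hlt⟩ := hξ.exists_lyapunov_lt hfH hirr hτ hne
  have hle : lyapunov f H (ξ 0) ≤ lyapunov f H (ξ t) :=
    le_of_mem_omegaSet_of_antitoneOn hfH.isOpen
      (continuousOn_lyapunov hfH.isOpen hfH.contDiffOn hfH.contDiffOn_integral)
      (hfH.antitoneOn_lyapunov hγ) hy (hξω t ht)
  exact hlt.not_ge hle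

lemma first_integral_eq_of_mem_omegaSet (hX : IsOpen X) (hH : ContDiffOn ℝ 1 H X)
    (hfi : ∀ x ∈ X, fderiv ℝ H x (f x) = 0) (hγ : IsSolOn f X (Ici 0) γ)
    (hy : y ∈ omegaSet X γ) (hz : z ∈ omegaSet X γ) : H y = H z := by
  have hanti : AntitoneOn (fun t => H (γ t)) (Ici 0) := fun s hs t _ hst =>
    ((hγ.mono (Icc_subset_Ici_self.trans (Ici_subset_Ici.2 hs))).eq_of_first_integral
      hX hH hfi hst).le
  exact (le_of_mem_omegaSet_of_antitoneOn hX hH.continuousOn hanti hy hz).antisymm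
    (le_of_mem_omegaSet_of_antitoneOn hX hH.continuousOn hanti hz hy)

end OmegaLimit

/-- ω-limit sets are empty or singletons. -/
theorem stmt_8 {n : ℕ} {X : Set (Fin n → ℝ)} (hX : IsOpen X)
    {f : (Fin n → ℝ) → (Fin n → ℝ)} (hf : ContDiffOn ℝ 1 f X) (hcoop : coopVF f X)
    (hirr : ∀ x ∈ X, matIrred (jacMat f x))
    {H : (Fin n → ℝ) → ℝ} (hH : ContDiffOn ℝ 1 H X)
    (hfi : ∀ x ∈ X, fderiv ℝ H x (f x) = 0)
    (hgrad : ∀ x ∈ X, ∀ i, 0 < fderiv ℝ H x (Pi.single i 1)) :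
    ∀ γ : ℝ → Fin n → ℝ, IsSolOn f X (Set.Ici 0) γ →
      (omegaSet X γ).Subsingleton := by
  intro γ hγ y hy z hz
  have hfH : CoopFirstIntegral f H X := ⟨hX, hf, hcoop, hH, hfi, hgrad⟩
  refine (eq_of_mem_omegaSet_of_isolated hX hγ.continuousOn hy ?_ hz).symm
  have hfy : f y = 0 := hfH.apply_eq_zero_of_mem_omegaSet hirr hγ hy
  filter_upwards [hfH.eventually_eq_of_equilibrium hy.1 (hirr y hy.1) hfy] with w hiso hw
  exact hiso (hfH.apply_eq_zero_of_mem_omegaSet hirr hγ hw)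
    (first_integral_eq_of_mem_omegaSet hX hH hfi hγ hw hy)
end
end

section
/- Let X ⊆ ℝⁿ be open, let f : X → ℝⁿ be a C¹ cooperative irreducible vector field, and let H : X → ℝ be a C¹ first integral for ẋ = f(x) with positive gradient. If γ : (−∞,0] → X is a solution of ẋ = f(x) whose α-limit set is nonempty, then γ(0) is an equilibrium: f(γ(0)) = 0. -/
open Set Filter Topology

noncomputable section

/-!
Write `wᵢ = ∂ᵢH fⁱ`, so that `∑ᵢ wᵢ = 0`. Differentiating `⟨∇H, f⟩ = 0` shows that along a
solution `wᵢ' = ∑ⱼ (Fᵢⱼ - Fⱼᵢ)` with `Fᵢⱼ = ∂ᵢH (∂fⁱ/∂xʲ) fʲ`: the `wᵢ` exchange mass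
conservatively. By cooperativity `Fᵢⱼ` vanishes or has the sign of `wⱼ` for `i ≠ j`, so the
indices with `wᵢ > 0` jointly only lose mass, and `L = ∑ᵢ wᵢ⁺` is nonincreasing. Hence `L ≤ L(y)`
along the solution for an α-limit point `y`. Let `S = {i | wᵢ(y) > 0}`. If the mass on `S`
decreased strictly at `y`, then moving backwards in time from a point close to `y` would gain a
fixed amount of mass on `S` and push `L` above `L(y)`. So no mass leaves `S` at `y`, and
irreducibility of `Df(y)` leaves `S = ∅` or everything. The latter contradicts `∑ᵢ wᵢ = 0`, so
`L(y) = 0`, whence `L ≤ 0` and `f = 0` along the solution.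
-/

section Flux

variable {ι : Type*} [Fintype ι]

lemma sum_sum_sub_swap_eq_sum_compl {M : Type*} [DecidableEq ι] [AddCommGroup M]
    (F : ι → ι → M) (S : Finset ι) :
    ∑ i ∈ S, ∑ j, (F i j - F j i) = ∑ i ∈ S, ∑ j ∈ Sᶜ, (F i j - F j i) := by
  have internal : ∑ i ∈ S, ∑ j ∈ S, (F i j - F j i) = 0 := by
    simp_rw [Finset.sum_sub_distrib]
    rw [sub_eq_zero, Finset.sum_comm]
  simp_rw [← Finset.sum_add_sum_compl S, Finset.sum_add_distrib]
  rw [internal, zero_add]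

variable {R : Type*} [AddCommGroup R] [PartialOrder R] [IsOrderedAddMonoid R]
  {F : ι → ι → R} {S : Finset ι}

lemma sum_sum_sub_swap_nonpos (hin : ∀ i ∈ S, ∀ j ∉ S, F i j ≤ 0)
    (hout : ∀ i ∈ S, ∀ j ∉ S, 0 ≤ F j i) :
    ∑ i ∈ S, ∑ j, (F i j - F j i) ≤ 0 := by
  classical
  rw [sum_sum_sub_swap_eq_sum_compl]
  refine Finset.sum_nonpos fun i hi => Finset.sum_nonpos fun j hj => ?_
  rw [Finset.mem_compl] at hj
  exact sub_nonpos.mpr ((hin i hi j hj).trans (hout i hi j hj))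

lemma eq_zero_of_sum_sum_sub_swap_nonneg
    (hin : ∀ i ∈ S, ∀ j ∉ S, F i j ≤ 0) (hout : ∀ i ∈ S, ∀ j ∉ S, 0 ≤ F j i)
    (hsum : 0 ≤ ∑ i ∈ S, ∑ j, (F i j - F j i)) {i j : ι} (hi : i ∈ S) (hj : j ∉ S) :
    F j i = 0 := by
  classical
  have hnonpos : ∀ i ∈ S, ∀ j ∈ Sᶜ, F i j - F j i ≤ 0 := fun i hi j hj =>
    have hj := Finset.mem_compl.mp hj
    sub_nonpos.mpr ((hin i hi j hj).trans (hout i hi j hj))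
  have hzero := hsum.antisymm' (sum_sum_sub_swap_nonpos hin hout)
  rw [sum_sum_sub_swap_eq_sum_compl,
    Finset.sum_eq_zero_iff_of_nonpos fun i hi => Finset.sum_nonpos (hnonpos i hi)] at hzero
  have hij := (Finset.sum_eq_zero_iff_of_nonpos (hnonpos i hi)).mp (hzero i hi) j
    (Finset.mem_compl.mpr hj)
  exact ((sub_eq_zero.mp hij).symm.trans_le (hin i hi j hj)).antisymm (hout i hi j hj)

end Flux

section PosPart

variable {ι R : Type*} [Fintype ι] [AddCommGroup R] [LinearOrder R]

lemma sum_le_sum_posPart [IsOrderedAddMonoid R] (w : ι → R) (S : Finset ι) :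
    ∑ i ∈ S, w i ≤ ∑ i, (w i)⁺ :=
  (Finset.sum_le_sum fun i _ => le_posPart (w i)).trans
    (Finset.sum_le_univ_sum_of_nonneg fun i => posPart_nonneg (w i))

lemma sum_filter_pos_eq_sum_posPart (w : ι → R) : ∑ i with 0 < w i, w i = ∑ i, (w i)⁺ := by
  rw [Finset.sum_filter]
  refine Finset.sum_congr rfl fun i _ => ?_
  split_ifs with h
  · exact (posPart_of_nonneg h.le).symm
  · exact (posPart_of_nonpos (not_lt.mp h)).symm

end PosPart

lemma apply_eq_sum_smul_apply_single {ι R M : Type*} [Fintype ι] [DecidableEq ι] [Semiring R]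
    [AddCommMonoid M] [Module R M] [TopologicalSpace R] [TopologicalSpace M]
    (L : (ι → R) →L[R] M) (v : ι → R) :
    L v = ∑ i, v i • L (Pi.single i 1) := by
  conv_lhs => rw [pi_eq_sum_univ' v]
  simp only [map_sum, map_smul]

section Limits

variable {𝕜 E F : Type*} [NontriviallyNormedField 𝕜] [NormedAddCommGroup E] [NormedSpace 𝕜 E]
  [NormedAddCommGroup F] [NormedSpace 𝕜 F]

lemma tendsto_slope_of_hasStrictFDerivAt {f : E → F} {f' : E →L[𝕜] F} {a : E}
    (hf : HasStrictFDerivAt f f' a) {α : Type*} {l : Filter α} {u : α → E} {r : α → 𝕜}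
    (hu : Tendsto u l (𝓝 a)) (hr : Tendsto r l (𝓝[≠] 0)) (e : E) :
    Tendsto (fun q => (r q)⁻¹ • (f (u q + r q • e) - f (u q))) l (𝓝 (f' e)) := by
  have hr₀ : Tendsto r l (𝓝 0) := hr.mono_right nhdsWithin_le_nhds
  have hshift : Tendsto (fun q => u q + r q • e) l (𝓝 a) := by
    simpa using hu.add (hr₀.smul_const e)
  have hbig : (fun q => r q • e) =O[l] r :=
    .of_bound ‖e‖ (.of_forall fun q => by rw [norm_smul, mul_comm])
  have herror : (fun q => f (u q + r q • e) - f (u q) - r q • f' e) =o[l] r := by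
    have := hf.isLittleO.comp_tendsto (hshift.prodMk_nhds hu)
    simp only [Function.comp_def, add_sub_cancel_left, map_smul] at this
    exact this.trans_isBigO hbig
  have hlim := herror.tendsto_inv_smul_nhds_zero.add_const (f' e)
  rw [zero_add] at hlim
  refine hlim.congr' ?_
  filter_upwards [hr.eventually self_mem_nhdsWithin] with q hq
  rw [smul_sub, inv_smul_smul₀ hq, sub_add_cancel]

end Limits

section FirstIntegral

variable {E F : Type*} [NormedAddCommGroup E] [NormedSpace ℝ E] [NormedAddCommGroup F]
  [NormedSpace ℝ F]

lemma hasDerivAt_inv_smul_sub_of_fderiv_apply_eq_zero {f : E → E} {H : E → F} {γ : ℝ → E} {s : ℝ}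
    (hγ : HasDerivAt γ (f (γ s)) s) {d : E} (hH : DifferentiableAt ℝ H (γ s))
    (hHd : DifferentiableAt ℝ H (γ s + d)) (hfi : fderiv ℝ H (γ s) (f (γ s)) = 0)
    (hfid : fderiv ℝ H (γ s + d) (f (γ s + d)) = 0) (r : ℝ) :
    HasDerivAt (fun τ => r⁻¹ • (H (γ τ + d) - H (γ τ)))
      (-fderiv ℝ H (γ s + d) (r⁻¹ • (f (γ s + d) - f (γ s)))) s := by
  refine (((hHd.hasFDerivAt.comp_hasDerivAt s (hγ.add_const d)).sub
    (hH.hasFDerivAt.comp_hasDerivAt s hγ)).const_smul r⁻¹).congr_deriv ?_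
  rw [hfi, map_smul, map_sub, hfid, sub_zero, zero_sub, smul_neg, neg_neg]

theorem hasDerivAt_fderiv_apply_of_firstIntegral_s9 {X : Set E} (hX : IsOpen X) {f : E → E}
    (hf : ContDiffOn ℝ 1 f X) {H : E → F} (hH : ContDiffOn ℝ 1 H X)
    (hfi : ∀ x ∈ X, fderiv ℝ H x (f x) = 0) {γ : ℝ → E} {t : ℝ} (hγX : γ t ∈ X)
    (hγ : ∀ᶠ s in 𝓝 t, HasDerivAt γ (f (γ s)) s) (e : E) :
    HasDerivAt (fun s => fderiv ℝ H (γ s) e)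
      (-fderiv ℝ H (γ t) (fderiv ℝ f (γ t) e)) t := by
  have hXt : X ∈ 𝓝 (γ t) := hX.mem_nhds hγX
  have hγt : Tendsto γ (𝓝 t) (𝓝 (γ t)) := hγ.self_of_nhds.continuousAt
  have hHdiff : ∀ z ∈ X, DifferentiableAt ℝ H z := fun z hz =>
    (hH.differentiableOn one_ne_zero).differentiableAt (hX.mem_nhds hz)
  have hdH : ContinuousAt (fderiv ℝ H) (γ t) :=
    (hH.continuousOn_fderiv_of_isOpen hX le_rfl).continuousAt hXt
  have hdf : ContinuousAt (fderiv ℝ f) (γ t) :=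
    (hf.continuousOn_fderiv_of_isOpen hX le_rfl).continuousAt hXt
  have hbase : Tendsto (fun q : ℝ × ℝ => γ q.2) (𝓝[≠] 0 ×ˢ 𝓝 t) (𝓝 (γ t)) :=
    hγt.comp tendsto_snd
  have hshift : Tendsto (fun q : ℝ × ℝ => γ q.2 + q.1 • e) (𝓝[≠] 0 ×ˢ 𝓝 t) (𝓝 (γ t)) := by
    simpa using hbase.add ((tendsto_fst.mono_right nhdsWithin_le_nhds).smul_const e)
  have hslope : Tendsto (fun q : ℝ × ℝ => q.1⁻¹ • (f (γ q.2 + q.1 • e) - f (γ q.2)))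
      (𝓝[≠] 0 ×ˢ 𝓝 t) (𝓝 (fderiv ℝ f (γ t) e)) :=
    tendsto_slope_of_hasStrictFDerivAt ((hf.contDiffAt hXt).hasStrictFDerivAt one_ne_zero)
      hbase tendsto_fst e
  -- `H` is only C¹, so its difference quotients, not `fderiv ℝ H`, are differentiated along `γ`.
  refine hasDerivAt_of_tendstoUniformlyOnFilter (l := 𝓝[≠] (0 : ℝ))
    (f := fun r s => r⁻¹ • (H (γ s + r • e) - H (γ s)))
    (f' := fun r s => -fderiv ℝ H (γ s + r • e) (r⁻¹ • (f (γ s + r • e) - f (γ s))))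
    (g' := fun s => -fderiv ℝ H (γ s) (fderiv ℝ f (γ s) e)) ?_ ?_ ?_
  · have hlimit : ContinuousAt (fun z => -fderiv ℝ H z (fderiv ℝ f z e)) (γ t) :=
      (hdH.clm_apply (hdf.clm_apply continuousAt_const)).neg
    have hquot := ((isBoundedBilinearMap_apply.continuous.tendsto (_, _)).comp
      ((hdH.tendsto.comp hshift).prodMk_nhds hslope)).neg
    rw [tendstoUniformlyOnFilter_iff_tendsto]
    exact ((hlimit.tendsto.comp hbase).prodMk_nhds hquot).mono_right (nhds_le_uniformity _)
  · filter_upwards [hshift.eventually hXt, hbase.eventually hXt, tendsto_snd.eventually hγ]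
      with ⟨r, s⟩ hshiftX hbaseX hγs
    exact hasDerivAt_inv_smul_sub_of_fderiv_apply_eq_zero hγs (hHdiff _ hbaseX)
      (hHdiff _ hshiftX) (hfi _ hbaseX) (hfi _ hshiftX) r
  · filter_upwards [hγt.eventually hXt] with s hs
    exact ((hHdiff _ hs).hasFDerivAt.hasLineDerivAt e).tendsto_slope_zero

end FirstIntegral

section Backward

lemma le_of_forall_lower_support_deriv_nonpos {g : ℝ → ℝ} {a b : ℝ} (hab : a ≤ b)
    (hg : ContinuousOn g (Icc a b))
    (hsupport : ∀ t ∈ Ioc a b, ∃ φ : ℝ → ℝ, ∃ φ' ≤ 0,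
      HasDerivAt φ φ' t ∧ φ t = g t ∧ ∀ s, φ s ≤ g s) :
    g b ≤ g a := by
  -- Time is reversed: the supports from below bound the right slopes of `s ↦ -g (a + b - s)`.
  have hreflect : MapsTo (fun s => a + b - s) (Icc a b) (Icc a b) := fun s hs =>
    ⟨by linarith [hs.2], by linarith [hs.1]⟩
  have hfence := image_le_of_liminf_slope_right_le_deriv_boundary
    (f := fun s => -g (a + b - s)) (B := fun _ => -g b) (B' := fun _ => 0) (a := a) (b := b)
    (hg.comp (by fun_prop) hreflect).neg (by simp) continuousOn_const
    (fun _ _ => hasDerivWithinAt_const _ _ _) ?_ (right_mem_Icc.mpr hab)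
  · simpa using hfence
  · intro s hs r hr
    obtain ⟨φ, φ', hφ', hφ, heq, hle⟩ :=
      hsupport (a + b - s) ⟨by linarith [hs.2], by linarith [hs.1]⟩
    have hψ := (hφ.comp_const_sub (a + b) s).neg
    rw [neg_neg] at hψ
    refine ((hψ.hasDerivWithinAt.liminf_right_slope_le (hφ'.trans_lt hr)).and_eventually
      self_mem_nhdsWithin).mono fun z ⟨hz, hsz⟩ => ?_
    have : 0 < z - s := sub_pos.mpr hsz
    refine lt_of_le_of_lt ?_ hz
    simp only [slope_def_field, Pi.neg_apply, heq]
    gcongr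
    exact hle _

lemma le_of_antitoneOn_of_mapClusterPt {E : Type*} [TopologicalSpace E] {x : ℝ → E} {y : E}
    {L : E → ℝ} {c : ℝ} (hL : ContinuousAt L y) (hanti : AntitoneOn (fun t => L (x t)) (Iio c))
    (hy : MapClusterPt y atBot x) {t : ℝ} (ht : t < c) : L (x t) ≤ L y := by
  by_contra! hlt
  obtain ⟨s, hs, hst⟩ := ((hy.frequently (hL.eventually_lt_const hlt)).and_eventually
    (eventually_le_atBot t)).exists
  exact (hanti (hst.trans_lt ht) ht hst).not_gt hs

variable {E : Type*} [NormedAddCommGroup E] [NormedSpace ℝ E]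

lemma dist_le_of_norm_deriv_lt {x x' : ℝ → E} {y : E} {a b M r : ℝ} (hM : 0 ≤ M)
    (hx : ∀ t ∈ Icc a b, HasDerivAt x (x' t) t) (hr : dist (x b) y + M * (b - a) ≤ r)
    (hx' : ∀ t ∈ Icc a b, dist (x t) y ≤ r → ‖x' t‖ < M) {t : ℝ} (ht : t ∈ Icc a b) :
    dist (x t) y ≤ r := by
  have hreflect : ∀ s ∈ Icc a b, a + b - s ∈ Icc a b := fun s hs =>
    ⟨by linarith [hs.2], by linarith [hs.1]⟩
  have hderiv : ∀ s ∈ Icc a b,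
      HasDerivAt (fun s => x (a + b - s) - y) (-x' (a + b - s)) s := fun s hs =>
    ((hx _ (hreflect s hs)).comp_const_sub (a + b) s).sub_const y
  have hboundary : ∀ s ∈ Icc a b, dist (x b) y + M * (s - a) ≤ r := fun s hs =>
    (by gcongr; exact hs.2 : dist (x b) y + M * (s - a) ≤ _).trans hr
  have hfence := image_norm_le_of_norm_deriv_right_lt_deriv_boundary
    (f := fun s => x (a + b - s) - y) (f' := fun s => -x' (a + b - s))
    (B := fun s => dist (x b) y + M * (s - a)) (B' := fun _ => M)
    (fun s hs => (hderiv s hs).continuousAt.continuousWithinAt)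
    (fun s hs => (hderiv s (Ico_subset_Icc_self hs)).hasDerivWithinAt)
    (by simp [dist_eq_norm])
    (fun s => by simpa using (((hasDerivAt_id s).sub_const a).const_mul M).const_add (dist (x b) y))
    (fun s hs heq => by
      have hs := Ico_subset_Icc_self hs
      rw [norm_neg]
      exact hx' _ (hreflect s hs) (by rw [dist_eq_norm, heq]; exact hboundary s hs))
    (hreflect t ht)
  rw [sub_sub_cancel, ← dist_eq_norm] at hfence
  exact hfence.trans (hboundary _ (hreflect t ht))

lemma exists_forall_add_le_of_deriv_neg {x : ℝ → E} {v : E → E} {U g : E → ℝ} {y : E} {c : ℝ}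
    (hx : ∀ t < c, HasDerivAt x (v (x t)) t)
    (hU : ∀ t < c, HasDerivAt (fun s => U (x s)) (g (x t)) t)
    (hv : ContinuousAt v y) (hg : ContinuousAt g y) (hgy : g y < 0) :
    ∃ N ∈ 𝓝 y, ∃ δ > 0, ∃ η > 0, ∀ t < c, x t ∈ N → U (x t) + η ≤ U (x (t - δ)) := by
  obtain ⟨r, hr, hball⟩ := Metric.nhds_basis_closedBall.eventually_iff.mp
    ((hg.eventually_lt_const (show g y < g y / 2 by linarith)).and
      (hv.norm.eventually_lt_const (lt_add_one ‖v y‖)))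
  set M := ‖v y‖ + 1
  have hM : 0 < M := by positivity
  have hδ : 0 < r / 2 / M := by positivity
  refine ⟨Metric.closedBall y (r / 2), Metric.closedBall_mem_nhds y (half_pos hr), r / 2 / M, hδ,
    -(g y / 2) * (r / 2 / M), mul_pos (by linarith) hδ, fun t ht hxt => ?_⟩
  have hlt : ∀ s ∈ Icc (t - r / 2 / M) t, s < c := fun s hs => hs.2.trans_lt ht
  have hstay : ∀ s ∈ Icc (t - r / 2 / M) t, x s ∈ Metric.closedBall y r := fun s hs =>
    dist_le_of_norm_deriv_lt hM.le (fun τ hτ => hx τ (hlt τ hτ))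
      (by
        rw [sub_sub_cancel, mul_div_cancel₀ _ hM.ne']
        linarith [Metric.mem_closedBall.mp hxt])
      (fun τ _ hτ => (hball hτ).2) hs
  have hmean := (convex_Icc (t - r / 2 / M) t).image_sub_le_mul_sub_of_deriv_le
    (f := fun s => U (x s)) (C := g y / 2)
    (fun s hs => (hU s (hlt s hs)).continuousAt.continuousWithinAt)
    (fun s hs => (hU s (hlt s (interior_subset hs))).differentiableAt.differentiableWithinAt)
    (fun s hs => by
      rw [(hU s (hlt s (interior_subset hs))).deriv]
      exact (hball (hstay s (interior_subset hs))).1.le)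
    (t - r / 2 / M) (left_mem_Icc.mpr (by linarith)) t (right_mem_Icc.mpr (by linarith))
    (by linarith)
  rw [sub_sub_cancel] at hmean
  linarith

theorem deriv_nonneg_of_lower_support_at_mapClusterPt {x : ℝ → E} {v : E → E} {L U g : E → ℝ}
    {y : E} {c : ℝ} (hx : ∀ t < c, HasDerivAt x (v (x t)) t) (hv : ContinuousAt v y)
    (hy : MapClusterPt y atBot x) (hL : ContinuousAt L y)
    (hanti : AntitoneOn (fun t => L (x t)) (Iio c)) (hU : ContinuousAt U y)
    (hU' : ∀ t < c, HasDerivAt (fun s => U (x s)) (g (x t)) t) (hg : ContinuousAt g y)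
    (hUL : ∀ z, U z ≤ L z) (hUy : U y = L y) : 0 ≤ g y := by
  by_contra! hgy
  obtain ⟨N, hN, δ, hδ, η, hη, hgain⟩ := exists_forall_add_le_of_deriv_neg hx hU' hv hg hgy
  have hnear : ∀ᶠ z in 𝓝 y, z ∈ N ∧ L y - η < U z :=
    (eventually_mem_set.mpr hN).and (hU.eventually_const_lt (by linarith))
  obtain ⟨t, ⟨htN, htU⟩, htc⟩ :=
    ((hy.frequently hnear).and_eventually (eventually_lt_atBot c)).exists
  have hupper : L (x (t - δ)) ≤ L y :=
    le_of_antitoneOn_of_mapClusterPt hL hanti hy ((sub_lt_self t hδ).trans htc)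
  linarith [hgain t htc htN, hUL (x (t - δ))]

end Backward

section Exchange

variable {n : ℕ} {X : Set (Fin n → ℝ)} {f : (Fin n → ℝ) → (Fin n → ℝ)} {H : (Fin n → ℝ) → ℝ}
  {x : Fin n → ℝ}

/-- The rate `∂ᵢH(x) fⁱ(x)` at which the motion of the `i`-th coordinate changes `H`. -/
def coordRate (H : (Fin n → ℝ) → ℝ) (f : (Fin n → ℝ) → (Fin n → ℝ)) (x : Fin n → ℝ)
    (i : Fin n) : ℝ :=
  fderiv ℝ H x (Pi.single i 1) * f x i

/-- The flow `∂ᵢH(x) · ∂fⁱ/∂xʲ(x) · fʲ(x)` of coordinate rate from `j` to `i`. -/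
def transfer (H : (Fin n → ℝ) → ℝ) (f : (Fin n → ℝ) → (Fin n → ℝ)) (x : Fin n → ℝ)
    (i j : Fin n) : ℝ :=
  fderiv ℝ H x (Pi.single i 1) * jacMat f x i j * f x j

/-- The net flow of coordinate rate into the set `S` of coordinates. -/
def netTransfer (H : (Fin n → ℝ) → ℝ) (f : (Fin n → ℝ) → (Fin n → ℝ)) (S : Finset (Fin n))
    (x : Fin n → ℝ) : ℝ :=
  ∑ i ∈ S, ∑ j, (transfer H f x i j - transfer H f x j i)

/-- The total of the positive coordinate rates, which is the Lyapunov function of the argument. -/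
def positiveRate (H : (Fin n → ℝ) → ℝ) (f : (Fin n → ℝ) → (Fin n → ℝ)) (x : Fin n → ℝ) : ℝ :=
  ∑ i, (coordRate H f x i)⁺

/-- The set of coordinates whose motion increases `H`. -/
def gaining (H : (Fin n → ℝ) → ℝ) (f : (Fin n → ℝ) → (Fin n → ℝ)) (x : Fin n → ℝ) :
    Finset (Fin n) :=
  {i | 0 < coordRate H f x i}

lemma mem_gaining_iff {i : Fin n} (hi : 0 < fderiv ℝ H x (Pi.single i 1)) :
    i ∈ gaining H f x ↔ 0 < f x i := by
  rw [gaining, Finset.mem_filter_univ]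
  exact mul_pos_iff_of_pos_left hi

lemma sum_coordRate_eq_fderiv_apply : ∑ i, coordRate H f x i = fderiv ℝ H x (f x) := by
  rw [apply_eq_sum_smul_apply_single]
  simp only [coordRate, smul_eq_mul, mul_comm]

lemma sum_coordRate_le_positiveRate (S : Finset (Fin n)) :
    ∑ i ∈ S, coordRate H f x i ≤ positiveRate H f x :=
  sum_le_sum_posPart _ S

lemma sum_coordRate_gaining :
    ∑ i ∈ gaining H f x, coordRate H f x i = positiveRate H f x :=
  sum_filter_pos_eq_sum_posPart _

lemma positiveRate_eq_zero_of_gaining_eq_empty (h : gaining H f x = ∅) :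
    positiveRate H f x = 0 := by
  rw [← sum_coordRate_gaining, h, Finset.sum_empty]

lemma eq_zero_of_positiveRate_nonpos (hfi : fderiv ℝ H x (f x) = 0)
    (hgrad : ∀ i, 0 < fderiv ℝ H x (Pi.single i 1)) (hL : positiveRate H f x ≤ 0) : f x = 0 := by
  have hnonpos : ∀ i ∈ Finset.univ, coordRate H f x i ≤ 0 := fun i _ => by
    simpa using (sum_coordRate_le_positiveRate {i}).trans hL
  have hzero := (Finset.sum_eq_zero_iff_of_nonpos hnonpos).mp
    (sum_coordRate_eq_fderiv_apply.trans hfi)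
  funext i
  exact (mul_eq_zero.mp (hzero i (Finset.mem_univ i))).resolve_left (hgrad i).ne'

lemma gaining_ne_univ (hfi : fderiv ℝ H x (f x) = 0) (hne : (gaining H f x).Nonempty) :
    gaining H f x ≠ Finset.univ := by
  intro huniv
  have hpos : 0 < ∑ i ∈ gaining H f x, coordRate H f x i :=
    Finset.sum_pos (fun i hi => (Finset.mem_filter.mp hi).2) hne
  rw [huniv, sum_coordRate_eq_fderiv_apply, hfi] at hpos
  exact hpos.false

lemma transfer_nonpos_of_notMem_gaining (hcoop : ∀ i j, i ≠ j → 0 ≤ jacMat f x i j)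
    (hgrad : ∀ i, 0 < fderiv ℝ H x (Pi.single i 1))
    {i j : Fin n} (hi : i ∈ gaining H f x) (hj : j ∉ gaining H f x) : transfer H f x i j ≤ 0 := by
  have hij : i ≠ j := fun h => hj (h ▸ hi)
  rw [mem_gaining_iff (hgrad j), not_lt] at hj
  exact mul_nonpos_of_nonneg_of_nonpos (mul_nonneg (hgrad i).le (hcoop i j hij)) hj

lemma transfer_nonneg_of_mem_gaining (hcoop : ∀ i j, i ≠ j → 0 ≤ jacMat f x i j)
    (hgrad : ∀ i, 0 < fderiv ℝ H x (Pi.single i 1))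
    {i j : Fin n} (hi : i ∈ gaining H f x) (hj : j ∉ gaining H f x) : 0 ≤ transfer H f x j i := by
  have hji : j ≠ i := fun h => hj (h ▸ hi)
  rw [mem_gaining_iff (hgrad i)] at hi
  exact mul_nonneg (mul_nonneg (hgrad j).le (hcoop j i hji)) hi.le

lemma netTransfer_gaining_nonpos
    (hcoop : ∀ i j, i ≠ j → 0 ≤ jacMat f x i j)
    (hgrad : ∀ i, 0 < fderiv ℝ H x (Pi.single i 1)) :
    netTransfer H f (gaining H f x) x ≤ 0 :=
  sum_sum_sub_swap_nonpos
    (fun _ hi _ hj => transfer_nonpos_of_notMem_gaining hcoop hgrad hi hj)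
    (fun _ hi _ hj => transfer_nonneg_of_mem_gaining hcoop hgrad hi hj)

lemma jacMat_eq_zero_of_netTransfer_gaining_nonneg
    (hcoop : ∀ i j, i ≠ j → 0 ≤ jacMat f x i j)
    (hgrad : ∀ i, 0 < fderiv ℝ H x (Pi.single i 1))
    (hnet : 0 ≤ netTransfer H f (gaining H f x) x) {i j : Fin n} (hi : i ∈ gaining H f x)
    (hj : j ∉ gaining H f x) : jacMat f x j i = 0 := by
  have htransfer : transfer H f x j i = 0 := eq_zero_of_sum_sum_sub_swap_nonneg
    (fun _ hi _ hj => transfer_nonpos_of_notMem_gaining hcoop hgrad hi hj)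
    (fun _ hi _ hj => transfer_nonneg_of_mem_gaining hcoop hgrad hi hj) hnet hi hj
  have hfi : f x i ≠ 0 := ((mem_gaining_iff (hgrad i)).mp hi).ne'
  exact (mul_eq_zero.mp ((mul_eq_zero.mp htransfer).resolve_right hfi)).resolve_left (hgrad j).ne'

theorem gaining_eq_empty_of_netTransfer_gaining_nonneg
    (hcoop : ∀ i j, i ≠ j → 0 ≤ jacMat f x i j)
    (hgrad : ∀ i, 0 < fderiv ℝ H x (Pi.single i 1))
    (hirr : matIrred (jacMat f x))
    (hfi : fderiv ℝ H x (f x) = 0) (hnet : 0 ≤ netTransfer H f (gaining H f x) x) :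
    gaining H f x = ∅ := by
  by_contra hne
  obtain ⟨i₀, hi₀⟩ := Finset.nonempty_iff_ne_empty.mpr hne
  obtain ⟨j₀, hj₀⟩ : ∃ j, j ∉ gaining H f x := by
    simpa [Finset.eq_univ_iff_forall] using gaining_ne_univ hfi ⟨i₀, hi₀⟩
  obtain ⟨j, hj, i, hi, hji⟩ := hirr {j | j ∉ gaining H f x} ⟨j₀, hj₀⟩
    (Set.ne_univ_iff_exists_notMem _ |>.mpr ⟨i₀, not_not_intro hi₀⟩)
  exact hji (jacMat_eq_zero_of_netTransfer_gaining_nonneg hcoop hgrad hnet (not_not.mp hi) hj)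

lemma continuousOn_coordRate (hX : IsOpen X) (hf : ContinuousOn f X) (hH : ContDiffOn ℝ 1 H X)
    (i : Fin n) : ContinuousOn (fun x => coordRate H f x i) X :=
  ((hH.continuousOn_fderiv_of_isOpen hX le_rfl).clm_apply continuousOn_const).mul
    (continuousOn_pi.mp hf i)

lemma continuousOn_sum_coordRate (hX : IsOpen X) (hf : ContinuousOn f X) (hH : ContDiffOn ℝ 1 H X)
    (S : Finset (Fin n)) : ContinuousOn (fun x => ∑ i ∈ S, coordRate H f x i) X :=
  continuousOn_finsetSum S fun i _ => continuousOn_coordRate hX hf hH i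

lemma continuousOn_positiveRate (hX : IsOpen X) (hf : ContinuousOn f X) (hH : ContDiffOn ℝ 1 H X) :
    ContinuousOn (positiveRate H f) X :=
  continuousOn_finsetSum _ fun i _ =>
    (continuousOn_coordRate hX hf hH i).sup continuousOn_const

lemma continuousOn_transfer (hX : IsOpen X) (hf : ContDiffOn ℝ 1 f X) (hH : ContDiffOn ℝ 1 H X)
    (i j : Fin n) : ContinuousOn (fun x => transfer H f x i j) X :=
  (((hH.continuousOn_fderiv_of_isOpen hX le_rfl).clm_apply continuousOn_const).mul
    (continuousOn_pi.mp
      ((hf.continuousOn_fderiv_of_isOpen hX le_rfl).clm_apply continuousOn_const) i)).mul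
    (continuousOn_pi.mp hf.continuousOn j)

lemma continuousOn_netTransfer (hX : IsOpen X) (hf : ContDiffOn ℝ 1 f X)
    (hH : ContDiffOn ℝ 1 H X) (S : Finset (Fin n)) : ContinuousOn (netTransfer H f S) X :=
  continuousOn_finsetSum _ fun i _ => continuousOn_finsetSum _ fun j _ =>
    (continuousOn_transfer hX hf hH i j).sub (continuousOn_transfer hX hf hH j i)

section Solution

variable {γ : ℝ → Fin n → ℝ}

lemma hasDerivAt_coordRate (hX : IsOpen X) (hf : ContDiffOn ℝ 1 f X) (hH : ContDiffOn ℝ 1 H X)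
    (hfi : ∀ x ∈ X, fderiv ℝ H x (f x) = 0) {t : ℝ} (hγX : γ t ∈ X)
    (hγ : ∀ᶠ s in 𝓝 t, HasDerivAt γ (f (γ s)) s) (i : Fin n) :
    HasDerivAt (fun s => coordRate H f (γ s) i)
      (∑ j, (transfer H f (γ t) i j - transfer H f (γ t) j i)) t := by
  have hf' : HasFDerivAt f (fderiv ℝ f (γ t)) (γ t) :=
    ((hf.differentiableOn one_ne_zero).differentiableAt (hX.mem_nhds hγX)).hasFDerivAt
  have hgrad := hasDerivAt_fderiv_apply_of_firstIntegral_s9 hX hf hH hfi hγX hγ (Pi.single i 1)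
  have hvel := hasDerivAt_pi.mp (hf'.comp_hasDerivAt t hγ.self_of_nhds) i
  refine (hgrad.mul hvel).congr_deriv ?_
  have hin : fderiv ℝ H (γ t) (Pi.single i 1) * fderiv ℝ f (γ t) (f (γ t)) i =
      ∑ j, transfer H f (γ t) i j := by
    rw [apply_eq_sum_smul_apply_single (fderiv ℝ f (γ t)), Finset.sum_apply, Finset.mul_sum]
    refine Finset.sum_congr rfl fun j _ => ?_
    simp only [transfer, jacMat, Pi.smul_apply, smul_eq_mul]
    ring
  have hout : fderiv ℝ H (γ t) (fderiv ℝ f (γ t) (Pi.single i 1)) * f (γ t) i =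
      ∑ j, transfer H f (γ t) j i := by
    rw [apply_eq_sum_smul_apply_single (fderiv ℝ H (γ t)), Finset.sum_mul]
    refine Finset.sum_congr rfl fun j _ => ?_
    simp only [transfer, jacMat, smul_eq_mul]
    ring
  rw [Finset.sum_sub_distrib, ← hin, ← hout]
  simp only [Function.comp_apply]
  ring

lemma hasDerivAt_sum_coordRate (hX : IsOpen X) (hf : ContDiffOn ℝ 1 f X) (hH : ContDiffOn ℝ 1 H X)
    (hfi : ∀ x ∈ X, fderiv ℝ H x (f x) = 0) {t : ℝ} (hγX : γ t ∈ X)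
    (hγ : ∀ᶠ s in 𝓝 t, HasDerivAt γ (f (γ s)) s) (S : Finset (Fin n)) :
    HasDerivAt (fun s => ∑ i ∈ S, coordRate H f (γ s) i) (netTransfer H f S (γ t)) t :=
  .fun_sum fun i _ => hasDerivAt_coordRate hX hf hH hfi hγX hγ i

theorem antitoneOn_positiveRate_comp (hX : IsOpen X) (hf : ContDiffOn ℝ 1 f X)
    (hcoop : coopVF f X) (hH : ContDiffOn ℝ 1 H X) (hfi : ∀ x ∈ X, fderiv ℝ H x (f x) = 0)
    (hgrad : ∀ x ∈ X, ∀ i, 0 < fderiv ℝ H x (Pi.single i 1)) {I : Set ℝ} (hI : IsOpen I)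
    (hIconn : I.OrdConnected) (hγ : IsSolOn f X I γ) :
    AntitoneOn (fun t => positiveRate H f (γ t)) I := by
  intro a ha b hb hab
  have hsub : Icc a b ⊆ I := hIconn.out ha hb
  have hγcont : ContinuousOn γ (Icc a b) := fun t ht =>
    (hγ.2 t (hsub ht)).continuousWithinAt.mono hsub
  refine le_of_forall_lower_support_deriv_nonpos hab
    ((continuousOn_positiveRate hX hf.continuousOn hH).comp hγcont fun t ht => hγ.1 t (hsub ht))
    fun t ht => ?_
  have htI : t ∈ I := hsub (Ioc_subset_Icc_self ht)
  have hγ' : ∀ᶠ s in 𝓝 t, HasDerivAt γ (f (γ s)) s := by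
    filter_upwards [hI.mem_nhds htI] with s hs using (hγ.2 s hs).hasDerivAt (hI.mem_nhds hs)
  exact ⟨fun s => ∑ i ∈ gaining H f (γ t), coordRate H f (γ s) i, _,
    netTransfer_gaining_nonpos (hcoop _ (hγ.1 t htI)) (hgrad _ (hγ.1 t htI)),
    hasDerivAt_sum_coordRate hX hf hH hfi (hγ.1 t htI) hγ' _, sum_coordRate_gaining,
    fun _ => sum_coordRate_le_positiveRate _⟩

end Solution

end Exchange

lemma mapClusterPt_atBot_of_mem_alphaSet {n : ℕ} {X : Set (Fin n → ℝ)} {γ : ℝ → Fin n → ℝ}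
    {y : Fin n → ℝ} (hy : y ∈ alphaSet X γ) : MapClusterPt y atBot γ :=
  let ⟨_, _, hT, hlim⟩ := hy
  .of_comp hT hlim.mapClusterPt

theorem netTransfer_gaining_nonneg_of_mem_alphaSet {n : ℕ} {X : Set (Fin n → ℝ)} (hX : IsOpen X)
    {f : (Fin n → ℝ) → (Fin n → ℝ)} (hf : ContDiffOn ℝ 1 f X) (hcoop : coopVF f X)
    {H : (Fin n → ℝ) → ℝ} (hH : ContDiffOn ℝ 1 H X) (hfi : ∀ x ∈ X, fderiv ℝ H x (f x) = 0)
    (hgrad : ∀ x ∈ X, ∀ i, 0 < fderiv ℝ H x (Pi.single i 1))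
    {γ : ℝ → Fin n → ℝ} {c : ℝ} (hγ : IsSolOn f X (Set.Iio c) γ) {y : Fin n → ℝ}
    (hy : y ∈ alphaSet X γ) : 0 ≤ netTransfer H f (gaining H f y) y := by
  have hyX : X ∈ 𝓝 y := hX.mem_nhds hy.1
  have hγ' : ∀ t < c, HasDerivAt γ (f (γ t)) t := fun t ht =>
    (hγ.2 t ht).hasDerivAt (Iio_mem_nhds ht)
  refine deriv_nonneg_of_lower_support_at_mapClusterPt hγ' (hf.continuousOn.continuousAt hyX)
    (mapClusterPt_atBot_of_mem_alphaSet hy)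
    ((continuousOn_positiveRate hX hf.continuousOn hH).continuousAt hyX)
    (antitoneOn_positiveRate_comp hX hf hcoop hH hfi hgrad isOpen_Iio ordConnected_Iio hγ)
    ((continuousOn_sum_coordRate hX hf.continuousOn hH _).continuousAt hyX)
    (fun t ht => hasDerivAt_sum_coordRate hX hf hH hfi (hγ.1 t ht) ?_ _)
    ((continuousOn_netTransfer hX hf hH _).continuousAt hyX)
    (fun _ => sum_coordRate_le_positiveRate _) sum_coordRate_gaining
  filter_upwards [Iio_mem_nhds ht] with s hs using hγ' s hs

theorem stmt_9_general {n : ℕ} {X : Set (Fin n → ℝ)} (hX : IsOpen X)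
    {f : (Fin n → ℝ) → (Fin n → ℝ)} (hf : ContDiffOn ℝ 1 f X) (hcoop : coopVF f X)
    {H : (Fin n → ℝ) → ℝ} (hH : ContDiffOn ℝ 1 H X)
    (hfi : ∀ x ∈ X, fderiv ℝ H x (f x) = 0)
    (hgrad : ∀ x ∈ X, ∀ i, 0 < fderiv ℝ H x (Pi.single i 1))
    {γ : ℝ → Fin n → ℝ} (hγ : IsSolOn f X (Set.Iic 0) γ)
    {y : Fin n → ℝ} (hy : y ∈ alphaSet X γ) (hirr : matIrred (jacMat f y)) :
    f (γ 0) = 0 := by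
  have hγneg : IsSolOn f X (Iio 0) γ :=
    ⟨fun t ht => hγ.1 t (Iio_subset_Iic_self ht),
      fun t ht => (hγ.2 t (Iio_subset_Iic_self ht)).mono Iio_subset_Iic_self⟩
  have hLy : positiveRate H f y = 0 := positiveRate_eq_zero_of_gaining_eq_empty <|
    gaining_eq_empty_of_netTransfer_gaining_nonneg (hcoop y hy.1) (hgrad y hy.1) hirr (hfi y hy.1)
      (netTransfer_gaining_nonneg_of_mem_alphaSet hX hf hcoop hH hfi hgrad hγneg hy)
  have hLγ : ∀ t < 0, positiveRate H f (γ t) ≤ 0 := fun t ht => hLy ▸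
    le_of_antitoneOn_of_mapClusterPt
      ((continuousOn_positiveRate hX hf.continuousOn hH).continuousAt (hX.mem_nhds hy.1))
      (antitoneOn_positiveRate_comp hX hf hcoop hH hfi hgrad isOpen_Iio ordConnected_Iio hγneg)
      (mapClusterPt_atBot_of_mem_alphaSet hy) ht
  have heq : EqOn (fun t => f (γ t)) (fun _ => 0) (Iio 0) := fun t ht =>
    eq_zero_of_positiveRate_nonpos (hfi _ (hγneg.1 t ht)) (hgrad _ (hγneg.1 t ht)) (hLγ t ht)
  have hcont : ContinuousOn (fun t => f (γ t)) (Iic 0) :=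
    hf.continuousOn.comp (fun t ht => (hγ.2 t ht).continuousWithinAt) hγ.1
  exact heq.of_subset_closure hcont continuousOn_const Iio_subset_Iic_self (closure_Iio 0).ge
    (mem_Iic.mpr le_rfl)

/-- if the α-limit set of a solution is nonempty, the solution
starts (hence stays) at an equilibrium. -/
theorem stmt_9 {n : ℕ} {X : Set (Fin n → ℝ)} (hX : IsOpen X)
    {f : (Fin n → ℝ) → (Fin n → ℝ)} (hf : ContDiffOn ℝ 1 f X) (hcoop : coopVF f X)
    (hirr : ∀ x ∈ X, matIrred (jacMat f x))
    {H : (Fin n → ℝ) → ℝ} (hH : ContDiffOn ℝ 1 H X)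
    (hfi : ∀ x ∈ X, fderiv ℝ H x (f x) = 0)
    (hgrad : ∀ x ∈ X, ∀ i, 0 < fderiv ℝ H x (Pi.single i 1))
    {γ : ℝ → Fin n → ℝ} (hγ : IsSolOn f X (Set.Iic 0) γ)
    (hα : (alphaSet X γ).Nonempty) :
    f (γ 0) = 0 :=
  let ⟨_, hy⟩ := hα
  stmt_9_general hX hf hcoop hH hfi hgrad hγ hy (hirr _ hy.1)
end
end

section
/- Let X ⊆ ℝⁿ be an open, order-convex set such that x ∨ y ∈ X and x ∧ y ∈ X for all x, y ∈ X (componentwise maximum and minimum), let f : X → ℝⁿ be a C¹ cooperative irreducible vector field, and let H : X → ℝ be a C¹ first integral for ẋ = f(x) with positive gradient. Then for every c ∈ ℝ the level set H⁻¹(c) = {z ∈ X : H(z) = c} is connected. -/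
open Set Filter Topology

noncomputable section

/-!
A function with positive gradient strictly increases along segments joining order-related points,
so `H` is strictly monotone on `X`. Given two points `x ≠ y` of the level set `H = c`, pick
`p ≤ x, y ≤ q` in `X`. Then `H p < c`, while `H ≥ c` on the path `x → q → y`. Each segment from `p`
to a point `w` of this path therefore meets the level set exactly once, at a point depending
continuously on `w`, and the image of the path under this radial projection connects `x` to `y`
inside the level set.
-/

/-- p-convexity: `X` contains the segment between any two of its order-related points. This is
`pconvex` in an arbitrary ordered real vector space, stated with `≤` instead of `<`. -/
def IsPConvex {E : Type*} [AddCommGroup E] [PartialOrder E] [Module ℝ E] (X : Set E) : Prop :=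
  ∀ ⦃x⦄, x ∈ X → ∀ ⦃y⦄, y ∈ X → x ≤ y → segment ℝ x y ⊆ X

theorem orderConvex.isPConvex {n : ℕ} {X : Set (Fin n → ℝ)} (hX : orderConvex X) :
    IsPConvex X :=
  fun x hx y hy hxy => (segment_subset_Icc hxy).trans (hX x hx y hy hxy)

theorem IsPConvex.mapsTo_lineMap {E : Type*} [AddCommGroup E] [PartialOrder E] [Module ℝ E]
    {X : Set E} (hX : IsPConvex X) {x y : E} (hx : x ∈ X) (hy : y ∈ X) (hxy : x ≤ y) :
    MapsTo (AffineMap.lineMap x y) (Icc (0 : ℝ) 1) X :=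
  fun _ ht => hX hx hy hxy (lineMap_mem_segment ℝ x y ht)

theorem linearMap_apply_pos_of_forall_single_pos {ι R M : Type*} [Finite ι] [DecidableEq ι]
    [Semiring R] [PartialOrder R] [AddCommMonoid M] [PartialOrder M] [IsOrderedCancelAddMonoid M]
    [Module R M] [PosSMulStrictMono R M] {L : (ι → R) →ₗ[R] M} (hL : ∀ i, 0 < L (Pi.single i 1))
    {v : ι → R} (hv : 0 < v) : 0 < L v := by
  have := Fintype.ofFinite ι
  obtain ⟨hv_nonneg, i, hvi⟩ := Pi.lt_def.mp hv
  have hLv : L v = ∑ i, v i • L (Pi.single i 1) := by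
    simp only [← map_smul, ← map_sum, ← Pi.single_smul, smul_eq_mul, mul_one,
      Finset.univ_sum_single]
  rw [hLv]
  exact Finset.sum_pos' (fun j _ => smul_nonneg (hv_nonneg j) (hL j).le)
    ⟨i, Finset.mem_univ i, smul_pos hvi (hL i)⟩

theorem IsPConvex.strictMonoOn_of_hasFDerivWithinAt_pos {E : Type*} [NormedAddCommGroup E]
    [NormedSpace ℝ E] [PartialOrder E] [IsOrderedAddMonoid E] {X : Set E} (hX : IsPConvex X)
    {H : E → ℝ} {H' : E → E →L[ℝ] ℝ} (hH : ∀ x ∈ X, HasFDerivWithinAt H (H' x) X x)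
    (hpos : ∀ x ∈ X, ∀ v, 0 < v → 0 < H' x v) : StrictMonoOn H X := by
  intro x hx y hy hxy
  have hmaps : MapsTo (AffineMap.lineMap x y) (Icc (0 : ℝ) 1) X :=
    hX.mapsTo_lineMap hx hy hxy.le
  have hderiv : ∀ t ∈ Icc (0 : ℝ) 1, HasDerivWithinAt (fun t => H (AffineMap.lineMap x y t))
      (H' (AffineMap.lineMap x y t) (y - x)) (Icc 0 1) t := fun t ht =>
    (hH _ (hmaps ht)).comp_hasDerivWithinAt t AffineMap.hasDerivWithinAt_lineMap hmaps
  have hmono : StrictMonoOn (fun t : ℝ => H (AffineMap.lineMap x y t)) (Icc 0 1) :=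
    strictMonoOn_of_hasDerivWithinAt_pos (convex_Icc 0 1)
      (fun t ht => (hderiv t ht).continuousWithinAt)
      (fun t ht => (hderiv t (interior_subset ht)).mono interior_subset)
      (fun t ht => hpos _ (hmaps (interior_subset ht)) _ (sub_pos.mpr hxy))
  simpa using hmono (left_mem_Icc.mpr zero_le_one) (right_mem_Icc.mpr zero_le_one) zero_lt_one

theorem IsPConvex.strictMonoOn_of_partialDeriv_pos {ι : Type*} [Finite ι] [DecidableEq ι]
    {X : Set (ι → ℝ)} (hX : IsPConvex X) {H : (ι → ℝ) → ℝ}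
    (hdiff : ∀ x ∈ X, DifferentiableAt ℝ H x)
    (hgrad : ∀ x ∈ X, ∀ i, 0 < fderiv ℝ H x (Pi.single i 1)) : StrictMonoOn H X := by
  have := Fintype.ofFinite ι
  exact hX.strictMonoOn_of_hasFDerivWithinAt_pos
    (fun x hx => (hdiff x hx).hasFDerivAt.hasFDerivWithinAt)
    fun x hx _ hv => linearMap_apply_pos_of_forall_single_pos
      (L := (fderiv ℝ H x : (ι → ℝ) →ₗ[ℝ] ℝ)) (hgrad x hx) hv

theorem continuous_of_strictMono_apply_eq {T β α : Type*} [TopologicalSpace T]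
    [LinearOrder β] [TopologicalSpace β] [OrderTopology β]
    [LinearOrder α] [TopologicalSpace α] [OrderClosedTopology α]
    {F : T → β → α} (hmono : ∀ t, StrictMono (F t)) (hcont : ∀ b, Continuous fun t => F t b)
    {s : T → β} {c : α} (hs : ∀ t, F t (s t) = c) : Continuous s := by
  rw [OrderTopology.continuous_iff]
  intro b
  have hIoi : s ⁻¹' Ioi b = {t | F t b < c} := by
    ext t
    rw [mem_preimage, mem_Ioi, mem_ofPred_eq, ← hs t, (hmono t).lt_iff_lt]
  have hIio : s ⁻¹' Iio b = {t | c < F t b} := by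
    ext t
    rw [mem_preimage, mem_Iio, mem_ofPred_eq, ← hs t, (hmono t).lt_iff_lt]
  rw [hIoi, hIio]
  exact ⟨isOpen_lt (hcont b) continuous_const, isOpen_lt continuous_const (hcont b)⟩

section LevelSet

variable {E α : Type*} [AddCommGroup E] [PartialOrder E] [Module ℝ E] [LinearOrder α]
  {X : Set E} {H : E → α} {p w : E} {c : α}

theorem IsPConvex.strictMonoOn_comp_lineMap [IsOrderedAddMonoid E] [IsStrictOrderedModule ℝ E]
    (hX : IsPConvex X) (hmono : StrictMonoOn H X) (hp : p ∈ X) (hw : w ∈ X) (hpw : p < w) :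
    StrictMonoOn (fun t : ℝ => H (AffineMap.lineMap p w t)) (Icc 0 1) :=
  hmono.comp (fun _ _ _ _ hst => (lineMap_lt_lineMap_iff_of_lt' hpw).mpr hst)
    (hX.mapsTo_lineMap hp hw hpw.le)

variable [TopologicalSpace E] [IsTopologicalAddGroup E] [ContinuousSMul ℝ E]
  [TopologicalSpace α] [OrderClosedTopology α]

theorem IsPConvex.exists_apply_lineMap_eq (hX : IsPConvex X) (hcont : ContinuousOn H X)
    (hp : p ∈ X) (hw : w ∈ X) (hpw : p ≤ w) (hpc : H p ≤ c) (hcw : c ≤ H w) :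
    ∃ t : Icc (0 : ℝ) 1, H (AffineMap.lineMap p w (t : ℝ)) = c := by
  have hray : ContinuousOn (fun t : ℝ => H (AffineMap.lineMap p w t)) (Icc 0 1) :=
    hcont.comp AffineMap.lineMap_continuous.continuousOn (hX.mapsTo_lineMap hp hw hpw)
  obtain ⟨t, ht, htc⟩ := intermediate_value_Icc zero_le_one hray
    (show c ∈ Icc _ _ by simpa using ⟨hpc, hcw⟩)
  exact ⟨⟨t, ht⟩, htc⟩

variable [IsOrderedAddMonoid E] [IsStrictOrderedModule ℝ E]

theorem IsPConvex.exists_isPreconnected_subset_levelSet (hX : IsPConvex X)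
    (hcont : ContinuousOn H X) (hmono : StrictMonoOn H X) (hp : p ∈ X) (hpc : H p < c)
    {W : Set E} (hW : IsPreconnected W) (hWX : W ⊆ X) (hpW : ∀ w ∈ W, p ≤ w)
    (hcW : ∀ w ∈ W, c ≤ H w) :
    ∃ Z ⊆ {z ∈ X | H z = c}, {w ∈ W | H w = c} ⊆ Z ∧ IsPreconnected Z := by
  have hmaps (w : W) : MapsTo (AffineMap.lineMap p (w : E)) (Icc (0 : ℝ) 1) X :=
    hX.mapsTo_lineMap hp (hWX w.2) (hpW w w.2)
  have hray_mono (w : W) :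
      StrictMono fun t : Icc (0 : ℝ) 1 => H (AffineMap.lineMap p (w : E) (t : ℝ)) :=
    (hX.strictMonoOn_comp_lineMap hmono hp (hWX w.2) <| (hpW w w.2).lt_of_ne fun hpw =>
      (hpc.trans_le (hcW w w.2)).ne (congrArg H hpw)).strictMono
  choose s hs using fun w : W =>
    hX.exists_apply_lineMap_eq hcont hp (hWX w.2) (hpW w w.2) hpc.le (hcW w w.2)
  have hs_cont : Continuous s := continuous_of_strictMono_apply_eq hray_mono
    (fun t => hcont.comp_continuous (by fun_prop) fun w => hmaps w t.2) hs
  have hs_one (w : W) (hwc : H w = c) : s w = 1 :=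
    (hray_mono w).injective <| by simpa using (hs w).trans hwc.symm
  have : PreconnectedSpace W := Subtype.preconnectedSpace hW
  refine ⟨range fun w : W => AffineMap.lineMap p (w : E) (s w : ℝ), ?_, ?_, ?_⟩
  · rintro _ ⟨w, rfl⟩
    exact ⟨hmaps w (s w).2, hs w⟩
  · rintro w ⟨hw, hwc⟩
    exact ⟨⟨w, hw⟩, by simp [hs_one ⟨w, hw⟩ hwc]⟩
  · exact isPreconnected_range (by fun_prop)

theorem stmt_10_general (hX : IsPConvex X) (hdir : DirectedOn (· ≤ ·) X)
    (hcodir : DirectedOn (· ≥ ·) X) (hcont : ContinuousOn H X) (hmono : StrictMonoOn H X)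
    (c : α) : IsPreconnected {z ∈ X | H z = c} := by
  refine isPreconnected_of_forall_pair ?_
  rintro x ⟨hx, hxc⟩ y ⟨hy, hyc⟩
  obtain rfl | hxy := eq_or_ne x y
  · exact ⟨{x}, by simp [hx, hxc], rfl, rfl, isPreconnected_singleton⟩
  obtain ⟨q, hq, hxq, hyq⟩ := hdir x hx y hy
  obtain ⟨p, hp, hpx, hpy⟩ := hcodir x hx y hy
  have hpc : H p < c := by
    obtain rfl | hpx := hpx.eq_or_lt
    · exact hyc ▸ hmono hp hy (hpy.lt_of_ne hxy)
    · exact hxc ▸ hmono hp hx hpx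
  have hseg {a : E} (ha : a ∈ X) (hac : H a = c) (hpa : p ≤ a) (haq : a ≤ q) :
      ∀ w ∈ segment ℝ a q, w ∈ X ∧ p ≤ w ∧ c ≤ H w := fun w hw =>
    have hwX : w ∈ X := hX ha hq haq hw
    have haw : a ≤ w := (segment_subset_Icc haq hw).1
    ⟨hwX, hpa.trans haw, hac ▸ hmono.monotoneOn ha hwX haw⟩
  have hpath : ∀ w ∈ segment ℝ x q ∪ segment ℝ y q, w ∈ X ∧ p ≤ w ∧ c ≤ H w := by
    rintro w (hw | hw)
    exacts [hseg hx hxc hpx hxq w hw, hseg hy hyc hpy hyq w hw]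
  have hconn : IsPreconnected (segment ℝ x q ∪ segment ℝ y q) :=
    (convex_segment x q).isPreconnected.union q (right_mem_segment ℝ x q)
      (right_mem_segment ℝ y q) (convex_segment y q).isPreconnected
  obtain ⟨Z, hZ, hWZ, hZconn⟩ := hX.exists_isPreconnected_subset_levelSet hcont hmono hp hpc
    hconn (fun w hw => (hpath w hw).1) (fun w hw => (hpath w hw).2.1) fun w hw => (hpath w hw).2.2
  exact ⟨Z, hZ, hWZ ⟨.inl (left_mem_segment ℝ x q), hxc⟩,
    hWZ ⟨.inr (left_mem_segment ℝ y q), hyc⟩, hZconn⟩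

end LevelSet

/-- level sets of the first integral are connected. -/
theorem stmt_10 {n : ℕ} {X : Set (Fin n → ℝ)} (hX : IsOpen X) (hoc : orderConvex X)
    (hlat : ∀ x ∈ X, ∀ y ∈ X, x ⊔ y ∈ X ∧ x ⊓ y ∈ X)
    {f : (Fin n → ℝ) → (Fin n → ℝ)} (hf : ContDiffOn ℝ 1 f X) (hcoop : coopVF f X)
    (hirr : ∀ x ∈ X, matIrred (jacMat f x))
    {H : (Fin n → ℝ) → ℝ} (hH : ContDiffOn ℝ 1 H X)
    (hfi : ∀ x ∈ X, fderiv ℝ H x (f x) = 0)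
    (hgrad : ∀ x ∈ X, ∀ i, 0 < fderiv ℝ H x (Pi.single i 1)) :
    ∀ c : ℝ, IsPreconnected {z ∈ X | H z = c} :=
  stmt_10_general hoc.isPConvex (SupClosed.directedOn fun x hx y hy => (hlat x hx y hy).1)
    (InfClosed.codirectedOn fun x hx y hy => (hlat x hx y hy).2) hH.continuousOn <|
      hoc.isPConvex.strictMonoOn_of_partialDeriv_pos
        (fun _ hx => (hH.differentiableOn one_ne_zero).differentiableAt (hX.mem_nhds hx)) hgrad
end
end
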